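/- arXiv:2405.03508 — 3 statements merged into one kernel-verified Lean document; each statement's English description precedes it below -/
import Mathlib

section
/- The specialization K̃(x,Y,1/S(x,y)) is irreducible as a polynomial in Y with coefficients in k(x), and the specialization K̃(X,y,1/S(x,y)) is irreducible as a polynomial in X with coefficients in k(y). -/
open IntermediateField
open scoped BigOperators Classical

set_option synthInstance.maxHeartbeats 1000000
set_option maxHeartbeats 1600000

noncomputable section

namespace QuadrantWalk

variable {K : Type} [Field K] [Algebra ℂ K]

/-- Evaluation of the step (Laurent) polynomial `S(X,Y) = ∑ w_{i,j} X^i Y^j`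
    at a pair of elements of a field. -/
def stepEval (St : Finset (ℤ × ℤ)) (w : ℤ × ℤ → ℂ) (u v : K) : K :=
  ∑ p ∈ St, algebraMap ℂ K (w p) * u ^ p.1 * v ^ p.2

/-- The step polynomial involves both `X` and `Y`. -/
def NotUnivariate (St : Finset (ℤ × ℤ)) : Prop :=
  (∃ p ∈ St, ∃ q ∈ St, p.1 ≠ q.1) ∧ ∃ p ∈ St, ∃ q ∈ St, p.2 ≠ q.2

/-- The kernel polynomial `K̃(X,Y,t) = X^mx * Y^my * (1 - t·S(X,Y))` as an element of
`ℂ[X,Y,t]`, with variables `0 ↦ X`, `1 ↦ Y`, `2 ↦ t`. -/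
def kernelPoly (St : Finset (ℤ × ℤ)) (w : ℤ × ℤ → ℂ) (mx my : ℕ) :
    MvPolynomial (Fin 3) ℂ :=
  MvPolynomial.X 0 ^ mx * MvPolynomial.X 1 ^ my -
    MvPolynomial.X 2 *
      ∑ p ∈ St, MvPolynomial.C (w p) *
        MvPolynomial.X 0 ^ (p.1 + (mx : ℤ)).toNat *
        MvPolynomial.X 1 ^ (p.2 + (my : ℤ)).toNat

/-- `-mx` (resp. `-my`) is the smallest `X`-exponent (resp. `Y`-exponent) of the model. -/
structure ExponentBounds (St : Finset (ℤ × ℤ)) (mx my : ℕ) : Prop where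
  lowerX : ∀ p ∈ St, -(mx : ℤ) ≤ p.1
  lowerY : ∀ p ∈ St, -(my : ℤ) ≤ p.2
  attainX : ∃ p ∈ St, p.1 = -(mx : ℤ)
  attainY : ∃ p ∈ St, p.2 = -(my : ℤ)

/-- `x`-adjacency : equal first coordinates and equal values of `S`. -/
def XAdj (St : Finset (ℤ × ℤ)) (w : ℤ × ℤ → ℂ) (a b : K × K) : Prop :=
  a.1 = b.1 ∧ stepEval St w a.1 a.2 = stepEval St w b.1 b.2

/-- `y`-adjacency : equal second coordinates and equal values of `S`. -/
def YAdj (St : Finset (ℤ × ℤ)) (w : ℤ × ℤ → ℂ) (a b : K × K) : Prop :=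
  a.2 = b.2 ∧ stepEval St w a.1 a.2 = stepEval St w b.1 b.2

/-- Adjacency. -/
def Adj (St : Finset (ℤ × ℤ)) (w : ℤ × ℤ → ℂ) (a b : K × K) : Prop :=
  XAdj St w a b ∨ YAdj St w a b

/-- The orbit of the walk: the equivalence class of `(x,y)` under the
reflexive-transitive closure of adjacency. -/
def orbit (St : Finset (ℤ × ℤ)) (w : ℤ × ℤ → ℂ) (x y : K) : Set (K × K) :=
  {a | Relation.ReflTransGen (Adj St w) (x, y) a}

/-- `k = ℂ(S(x,y))`. -/
def kF (St : Finset (ℤ × ℤ)) (w : ℤ × ℤ → ℂ) (x y : K) : IntermediateField ℂ K :=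
  adjoin ℂ {stepEval St w x y}

/-- `k(x) = ℂ(x, S(x,y))`. -/
def kxF (St : Finset (ℤ × ℤ)) (w : ℤ × ℤ → ℂ) (x y : K) : IntermediateField ℂ K :=
  adjoin ℂ {x, stepEval St w x y}

/-- `k(y) = ℂ(y, S(x,y))`. -/
def kyF (St : Finset (ℤ × ℤ)) (w : ℤ × ℤ → ℂ) (x y : K) : IntermediateField ℂ K :=
  adjoin ℂ {y, stepEval St w x y}

/-- `k(x,y) = ℂ(x,y)`. -/
def kxyF (x y : K) : IntermediateField ℂ K := adjoin ℂ {x, y}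

/-- `k(𝒪)`: the subfield generated over `k` by all coordinates of the orbit. -/
def orbitF (St : Finset (ℤ × ℤ)) (w : ℤ × ℤ → ℂ) (x y : K) : IntermediateField ℂ K :=
  adjoin ℂ ({stepEval St w x y} ∪ {z | ∃ a ∈ orbit St w x y, z = a.1 ∨ z = a.2})

/-- The standing hypotheses: nonzero weights, a non-univariate step polynomial,
`x, y` algebraically independent over `ℂ`, and `𝕂` an algebraic closure of `ℂ(x,y)`. -/
structure Setting (St : Finset (ℤ × ℤ)) (w : ℤ × ℤ → ℂ) (x y : K) : Prop where
  weight_ne : ∀ p ∈ St, w p ≠ 0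
  notUniv : NotUnivariate St
  indep : AlgebraicIndependent ℂ ![x, y]
  algClosed : IsAlgClosed K
  algebraic : Algebra.IsAlgebraic (kxyF x y) K

lemma self_mem_orbit (St : Finset (ℤ × ℤ)) (w : ℤ × ℤ → ℂ) (x y : K) :
    (x, y) ∈ orbit St w x y := Relation.ReflTransGen.refl

lemma x_mem_orbitF (St : Finset (ℤ × ℤ)) (w : ℤ × ℤ → ℂ) (x y : K) :
    x ∈ orbitF St w x y := by
  apply subset_adjoin
  exact Set.mem_union_right _ ⟨(x, y), self_mem_orbit St w x y, Or.inl rfl⟩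

lemma y_mem_orbitF (St : Finset (ℤ × ℤ)) (w : ℤ × ℤ → ℂ) (x y : K) :
    y ∈ orbitF St w x y := by
  apply subset_adjoin
  exact Set.mem_union_right _ ⟨(x, y), self_mem_orbit St w x y, Or.inr rfl⟩

lemma S_mem_orbitF (St : Finset (ℤ × ℤ)) (w : ℤ × ℤ → ℂ) (x y : K) :
    stepEval St w x y ∈ orbitF St w x y := by
  apply subset_adjoin
  exact Set.mem_union_left _ rfl

lemma x_mem_kxF (St : Finset (ℤ × ℤ)) (w : ℤ × ℤ → ℂ) (x y : K) :
    x ∈ kxF St w x y :=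
  subset_adjoin ℂ _ (Set.mem_insert _ _)

lemma S_mem_kxF (St : Finset (ℤ × ℤ)) (w : ℤ × ℤ → ℂ) (x y : K) :
    stepEval St w x y ∈ kxF St w x y :=
  subset_adjoin ℂ _ (Set.mem_insert_of_mem _ rfl)

lemma y_mem_kyF (St : Finset (ℤ × ℤ)) (w : ℤ × ℤ → ℂ) (x y : K) :
    y ∈ kyF St w x y :=
  subset_adjoin ℂ _ (Set.mem_insert _ _)

lemma S_mem_kyF (St : Finset (ℤ × ℤ)) (w : ℤ × ℤ → ℂ) (x y : K) :
    stepEval St w x y ∈ kyF St w x y :=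
  subset_adjoin ℂ _ (Set.mem_insert_of_mem _ rfl)

/-- The subgroup of `ℂ`-automorphisms of `M` fixing the subfield `E` pointwise. -/
def fixingAuts (E M : IntermediateField ℂ K) : Subgroup (↥M ≃ₐ[ℂ] ↥M) where
  carrier := {σ | ∀ (z : K) (_ : z ∈ E) (hzM : z ∈ M), σ ⟨z, hzM⟩ = ⟨z, hzM⟩}
  one_mem' := fun _ _ _ => rfl
  mul_mem' := by
    intro σ τ hσ hτ z hzE hzM
    show σ (τ ⟨z, hzM⟩) = ⟨z, hzM⟩
    rw [hτ z hzE hzM, hσ z hzE hzM]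
  inv_mem' := by
    intro σ hσ z hzE hzM
    show σ.symm ⟨z, hzM⟩ = ⟨z, hzM⟩
    conv_lhs => rw [← hσ z hzE hzM]
    exact σ.symm_apply_apply _

/-- The Galois group `G_x = Gal(k(𝒪)|k(x))`. -/
def Gx (St : Finset (ℤ × ℤ)) (w : ℤ × ℤ → ℂ) (x y : K) :
    Subgroup (↥(orbitF St w x y) ≃ₐ[ℂ] ↥(orbitF St w x y)) :=
  fixingAuts (kxF St w x y) (orbitF St w x y)

/-- The Galois group `G_y = Gal(k(𝒪)|k(y))`. -/
def Gy (St : Finset (ℤ × ℤ)) (w : ℤ × ℤ → ℂ) (x y : K) :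
    Subgroup (↥(orbitF St w x y) ≃ₐ[ℂ] ↥(orbitF St w x y)) :=
  fixingAuts (kyF St w x y) (orbitF St w x y)

/-- The Galois group `G_{xy} = Gal(k(𝒪)|k(x,y))`. -/
def Gxy (St : Finset (ℤ × ℤ)) (w : ℤ × ℤ → ℂ) (x y : K) :
    Subgroup (↥(orbitF St w x y) ≃ₐ[ℂ] ↥(orbitF St w x y)) :=
  fixingAuts (kxyF x y) (orbitF St w x y)

/-- Extend an automorphism of an intermediate field to a map on all of `K`
(by the identity outside). -/
def extendAut {M : IntermediateField ℂ K} (σ : ↥M ≃ₐ[ℂ] ↥M) (z : K) : K :=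
  if h : z ∈ M then (σ ⟨z, h⟩ : K) else z

/-- The coordinate-wise action of an automorphism on a `0`-chain. -/
def actChain {M : IntermediateField ℂ K} (σ : ↥M ≃ₐ[ℂ] ↥M)
    (γ : (K × K) →₀ ℂ) : (K × K) →₀ ℂ :=
  Finsupp.mapDomain (Prod.map (extendAut σ) (extendAut σ)) γ

/-- Evaluation of a polynomial `P(X,Y,t)` at `(u, v, 1/S(x,y))` for `(u,v) = a`. -/
def evalPt (St : Finset (ℤ × ℤ)) (w : ℤ × ℤ → ℂ) (x y : K)
    (P : MvPolynomial (Fin 3) ℂ) (a : K × K) : K :=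
  MvPolynomial.aeval ![a.1, a.2, (stepEval St w x y)⁻¹] P

/-- Evaluation of a polynomial `P(X,Y,t)` at `(x, y, 1/S(x,y))`. -/
def evalXY (St : Finset (ℤ × ℤ)) (w : ℤ × ℤ → ℂ) (x y : K)
    (P : MvPolynomial (Fin 3) ℂ) : K :=
  evalPt St w x y P (x, y)

/-- Evaluation of the fraction `A/B` at `(a.1, a.2, 1/S(x,y))`. -/
def fracEval (St : Finset (ℤ × ℤ)) (w : ℤ × ℤ → ℂ) (x y : K)
    (A B : MvPolynomial (Fin 3) ℂ) (a : K × K) : K :=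
  evalPt St w x y A a / evalPt St w x y B a

/-- Evaluation (orbit sum) of the fraction `A/B` on a `0`-chain. -/
def chainEval (St : Finset (ℤ × ℤ)) (w : ℤ × ℤ → ℂ) (x y : K)
    (A B : MvPolynomial (Fin 3) ℂ) (γ : (K × K) →₀ ℂ) : K :=
  γ.sum fun a c => algebraMap ℂ K c * fracEval St w x y A B a

/-- A `0`-chain cancels decoupled fractions: the orbit sum of every regular fraction
of the form `F(X,t) + G(Y,t)` on it vanishes. -/
def CancelsDecoupled (St : Finset (ℤ × ℤ)) (w : ℤ × ℤ → ℂ) (mx my : ℕ)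
    (x y : K) (α : (K × K) →₀ ℂ) : Prop :=
  ∀ A₁ B₁ A₂ B₂ : MvPolynomial (Fin 3) ℂ,
    A₁ ∈ MvPolynomial.supported ℂ ({0, 2} : Set (Fin 3)) →
    B₁ ∈ MvPolynomial.supported ℂ ({0, 2} : Set (Fin 3)) →
    A₂ ∈ MvPolynomial.supported ℂ ({1, 2} : Set (Fin 3)) →
    B₂ ∈ MvPolynomial.supported ℂ ({1, 2} : Set (Fin 3)) →
    ¬ kernelPoly St w mx my ∣ B₁ → ¬ kernelPoly St w mx my ∣ B₂ →
    (α.sum fun a c =>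
      algebraMap ℂ K c * (fracEval St w x y A₁ B₁ a + fracEval St w x y A₂ B₂ a)) = 0

/-- The field of fractions `ℂ(X,Y,t)`. -/
abbrev FF : Type := FractionRing (MvPolynomial (Fin 3) ℂ)

/-- The inclusion of `ℂ[X,Y,t]` into `ℂ(X,Y,t)`. -/
def toFF (P : MvPolynomial (Fin 3) ℂ) : FF := algebraMap (MvPolynomial (Fin 3) ℂ) FF P

/-- The regular fraction `A/B` admits a Galois decoupling:
`A/B = F + G + K̃·R` with `F ∈ ℂ(X,t)`, `G ∈ ℂ(Y,t)` and `R` regular. -/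
def AdmitsDecoupling (St : Finset (ℤ × ℤ)) (w : ℤ × ℤ → ℂ) (mx my : ℕ)
    (A B : MvPolynomial (Fin 3) ℂ) : Prop :=
  ∃ F₁ F₂ G₁ G₂ R₁ R₂ : MvPolynomial (Fin 3) ℂ,
    F₁ ∈ MvPolynomial.supported ℂ ({0, 2} : Set (Fin 3)) ∧
    F₂ ∈ MvPolynomial.supported ℂ ({0, 2} : Set (Fin 3)) ∧
    G₁ ∈ MvPolynomial.supported ℂ ({1, 2} : Set (Fin 3)) ∧
    G₂ ∈ MvPolynomial.supported ℂ ({1, 2} : Set (Fin 3)) ∧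
    ¬ kernelPoly St w mx my ∣ F₂ ∧ ¬ kernelPoly St w mx my ∣ G₂ ∧
    ¬ kernelPoly St w mx my ∣ R₂ ∧
    toFF A / toFF B =
      toFF F₁ / toFF F₂ + toFF G₁ / toFF G₂ +
        toFF (kernelPoly St w mx my) * (toFF R₁ / toFF R₂)

/-- `(I, J) = (A/B, Cc/D)` is a pair of Galois invariants: `I - J = K̃·R` with `R` regular. -/
def IsInvariantPair (St : Finset (ℤ × ℤ)) (w : ℤ × ℤ → ℂ) (mx my : ℕ)
    (A B Cc D : MvPolynomial (Fin 3) ℂ) : Prop :=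
  ∃ R₁ R₂ : MvPolynomial (Fin 3) ℂ, ¬ kernelPoly St w mx my ∣ R₂ ∧
    toFF A / toFF B - toFF Cc / toFF D =
      toFF (kernelPoly St w mx my) * (toFF R₁ / toFF R₂)

/-- A constant pair of Galois invariants: both members are equivalent to a
common fraction `c ∈ ℂ(t)` modulo `K̃`. -/
def IsConstantPair (St : Finset (ℤ × ℤ)) (w : ℤ × ℤ → ℂ) (mx my : ℕ)
    (A B Cc D : MvPolynomial (Fin 3) ℂ) : Prop :=
  IsInvariantPair St w mx my A B Cc D ∧
  ∃ c₁ c₂ : MvPolynomial (Fin 3) ℂ,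
    c₁ ∈ MvPolynomial.supported ℂ ({2} : Set (Fin 3)) ∧
    c₂ ∈ MvPolynomial.supported ℂ ({2} : Set (Fin 3)) ∧ c₂ ≠ 0 ∧
    IsInvariantPair St w mx my A B c₁ c₂ ∧ IsInvariantPair St w mx my Cc D c₁ c₂

/-- `(γx, γy)` is a pseudo-decoupling of `(x,y)`. -/
def PseudoDecoupling (St : Finset (ℤ × ℤ)) (w : ℤ × ℤ → ℂ) (mx my : ℕ)
    (x y : K) (γx γy : (K × K) →₀ ℂ) : Prop :=
  ∀ A B : MvPolynomial (Fin 3) ℂ, ¬ kernelPoly St w mx my ∣ B →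
    AdmitsDecoupling St w mx my A B →
      fracEval St w x y A B (x, y) =
          chainEval St w x y A B γx + chainEval St w x y A B γy ∧
        chainEval St w x y A B γx ∈ kxF St w x y ∧
        chainEval St w x y A B γy ∈ kyF St w x y

/-- `(gx, gy, a)` is a decoupling of `(x,y)` in the orbit. -/
def IsDecoupling (St : Finset (ℤ × ℤ)) (w : ℤ × ℤ → ℂ) (mx my : ℕ)
    (x y : K) (gx gy a : (K × K) →₀ ℂ) : Prop :=
  Finsupp.single (x, y) (1 : ℂ) = gx + gy + a ∧
  (∀ σ ∈ Gx St w x y, actChain σ gx = gx) ∧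
  (∀ σ ∈ Gy St w x y, actChain σ gy = gy) ∧
  CancelsDecoupled St w mx my x y a

/-- The `x`-part of the boundary of a `1`-chain. -/
def boundaryX (St : Finset (ℤ × ℤ)) (w : ℤ × ℤ → ℂ)
    (c : ((K × K) × (K × K)) →₀ ℂ) : (K × K) →₀ ℂ :=
  c.sum fun e coeff =>
    if XAdj St w e.1 e.2 then
      coeff • (Finsupp.single e.2 (1 : ℂ) - Finsupp.single e.1 (1 : ℂ)) else 0

/-- The `y`-part of the boundary of a `1`-chain. -/
def boundaryY (St : Finset (ℤ × ℤ)) (w : ℤ × ℤ → ℂ)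
    (c : ((K × K) × (K × K)) →₀ ℂ) : (K × K) →₀ ℂ :=
  c.sum fun e coeff =>
    if YAdj St w e.1 e.2 then
      coeff • (Finsupp.single e.2 (1 : ℂ) - Finsupp.single e.1 (1 : ℂ)) else 0

/-- The `0`-chain induced by a bicolored loop. -/
def IsBicoloredChain (St : Finset (ℤ × ℤ)) (w : ℤ × ℤ → ℂ) (x y : K)
    (α : (K × K) →₀ ℂ) : Prop :=
  ∃ (n : ℕ) (b : ℕ → K × K), 0 < n ∧ b (2 * n) = b 0 ∧
    (∀ j < 2 * n, b j ∈ orbit St w x y) ∧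
    (∀ i < n, XAdj St w (b (2 * i)) (b (2 * i + 1)) ∧
      YAdj St w (b (2 * i + 1)) (b (2 * i + 2))) ∧
    α = ∑ j ∈ Finset.range (2 * n), ((-1 : ℂ) ^ (j + 1)) • Finsupp.single (b j) (1 : ℂ)

/-- The `0`-chain `ω = (1/|𝒪|) ∑_{a ∈ 𝒪} a`. -/
def omegaChain (St : Finset (ℤ × ℤ)) (w : ℤ × ℤ → ℂ) (x y : K)
    (h : (orbit St w x y).Finite) : (K × K) →₀ ℂ :=
  ((h.toFinset.card : ℂ))⁻¹ • ∑ a ∈ h.toFinset, Finsupp.single a (1 : ℂ)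

/-- The average `[G]·γ = (1/|G|) ∑_{σ ∈ G} σ·γ` of a `0`-chain under a group. -/
def groupAverage {M : IntermediateField ℂ K} (G : Subgroup (↥M ≃ₐ[ℂ] ↥M))
    (γ : (K × K) →₀ ℂ) : (K × K) →₀ ℂ :=
  ((Nat.card G : ℂ))⁻¹ • ∑ᶠ σ ∈ (G : Set (↥M ≃ₐ[ℂ] ↥M)), actChain σ γ

/-- `ℂ[X,t]` (two variables: `0` and `1`). -/
abbrev MvP2 : Type := MvPolynomial (Fin 2) ℂ

/-- `ℂ(X,t)`, the fraction field of `ℂ[X,t]`. -/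
abbrev CXt : Type := FractionRing MvP2

/-- Constants `ℂ → ℂ(X,t)`. -/
def cconst : ℂ →+* CXt := (algebraMap MvP2 CXt).comp (MvPolynomial.C)

/-- The first generator of `ℂ(X,t)`. -/
def gen0 : CXt := algebraMap MvP2 CXt (MvPolynomial.X 0)

/-- The second generator of `ℂ(X,t)`. -/
def gen1 : CXt := algebraMap MvP2 CXt (MvPolynomial.X 1)

/-- The kernel polynomial viewed as a polynomial in `Y` over `ℂ(X,t)`. -/
def kernelInY (St : Finset (ℤ × ℤ)) (w : ℤ × ℤ → ℂ) (mx my : ℕ) :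
    Polynomial CXt :=
  MvPolynomial.eval₂ ((Polynomial.C : CXt →+* Polynomial CXt).comp cconst)
    ![Polynomial.C gen0, Polynomial.X, Polynomial.C gen1]
    (kernelPoly St w mx my)

/-- The kernel polynomial viewed as a polynomial in `X` over `ℂ(Y,t)`. -/
def kernelInX (St : Finset (ℤ × ℤ)) (w : ℤ × ℤ → ℂ) (mx my : ℕ) :
    Polynomial CXt :=
  MvPolynomial.eval₂ ((Polynomial.C : CXt →+* Polynomial CXt).comp cconst)
    ![Polynomial.X, Polynomial.C gen0, Polynomial.C gen1]
    (kernelPoly St w mx my)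

/-- The kernel polynomial viewed as a polynomial in `X, Y` over `ℂ(t)`. -/
def kernelInXY (St : Finset (ℤ × ℤ)) (w : ℤ × ℤ → ℂ) (mx my : ℕ) :
    MvPolynomial (Fin 2) (RatFunc ℂ) :=
  MvPolynomial.eval₂
    ((MvPolynomial.C : RatFunc ℂ →+* MvPolynomial (Fin 2) (RatFunc ℂ)).comp
      (RatFunc.C : ℂ →+* RatFunc ℂ))
    ![MvPolynomial.X 0, MvPolynomial.X 1, MvPolynomial.C RatFunc.X]
    (kernelPoly St w mx my)

/-- The specialization `K̃(x, Y, 1/S(x,y))` as a polynomial in `Y` over `k(x)`. -/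
def kernelAtX (St : Finset (ℤ × ℤ)) (w : ℤ × ℤ → ℂ) (mx my : ℕ) (x y : K) :
    Polynomial ↥(kxF St w x y) :=
  MvPolynomial.aeval
    ![Polynomial.C (⟨x, x_mem_kxF St w x y⟩ : kxF St w x y), Polynomial.X,
      Polynomial.C (⟨(stepEval St w x y)⁻¹, inv_mem (S_mem_kxF St w x y)⟩ : kxF St w x y)]
    (kernelPoly St w mx my)

/-- The specialization `K̃(X, y, 1/S(x,y))` as a polynomial in `X` over `k(y)`. -/
def kernelAtY (St : Finset (ℤ × ℤ)) (w : ℤ × ℤ → ℂ) (mx my : ℕ) (x y : K) :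
    Polynomial ↥(kyF St w x y) :=
  MvPolynomial.aeval
    ![Polynomial.X, Polynomial.C (⟨y, y_mem_kyF St w x y⟩ : kyF St w x y),
      Polynomial.C (⟨(stepEval St w x y)⁻¹, inv_mem (S_mem_kyF St w x y)⟩ : kyF St w x y)]
    (kernelPoly St w mx my)

/-- Values of regular fractions with numerator and denominator supported on a set
of variables. -/
def regRange (St : Finset (ℤ × ℤ)) (w : ℤ × ℤ → ℂ) (x y : K) (mx my : ℕ)
    (s : Set (Fin 3)) : Set K :=
  {z | ∃ A B : MvPolynomial (Fin 3) ℂ,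
    A ∈ MvPolynomial.supported ℂ s ∧ B ∈ MvPolynomial.supported ℂ s ∧
    ¬ kernelPoly St w mx my ∣ B ∧ z = evalXY St w x y A / evalXY St w x y B}

end QuadrantWalk
namespace QuadrantWalk

/-!
Over `F = ℂ(x)` the element `y` is transcendental, so `F(Y) ≅ F(y)`, and `1 / S(x, y)` is the value
at `y` of the rational function `A / B`, where `A = x ^ mx * Y ^ my` and
`B = x ^ mx * Y ^ my * S(x, Y)`. Since `Y` does not divide `B`, this fraction is in lowest terms; it
is not constant because `S` involves `Y`. The theorem behind Lüroth's says that for a nonconstant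
fraction `f` in lowest terms the polynomial `f.num - f * f.denom` is irreducible over `F(f)`. Here
`F(f) ≅ F(S(x, y)) = k(x)`, and the polynomial is `A - (1 / S(x, y)) * B = K̃(x, Y, 1 / S(x, y))`.
The other half exchanges the roles of `x` and `y`.
-/

section Luroth

open Polynomial

variable {F L : Type*} [Field F] [Field L] [Algebra F L]

theorem exists_unit_num_mul_eq_and_denom_mul_eq {A B : F[X]} (hAB : IsCoprime A B) (hB : B ≠ 0) :
    ∃ u : F[X]ˣ,
      (algebraMap F[X] (RatFunc F) A / algebraMap F[X] (RatFunc F) B).num * u = A ∧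
      (algebraMap F[X] (RatFunc F) A / algebraMap F[X] (RatFunc F) B).denom * u = B := by
  set f := algebraMap F[X] (RatFunc F) A / algebraMap F[X] (RatFunc F) B with hf
  obtain ⟨u, hBu⟩ : f.denom ∣ B := RatFunc.denom_div_dvd A B
  have hAu : A = f.num * u := mul_right_cancel₀ f.denom_ne_zero <| by
    rw [← (RatFunc.num_mul_eq_mul_denom_iff hB).2 hf, hBu]; ring
  have hu : IsUnit u :=
    hAB.isUnit_of_dvd' (Dvd.intro_left _ hAu.symm) (Dvd.intro_left _ hBu.symm)
  exact ⟨hu.unit, hAu.symm, hBu.symm⟩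

open scoped IntermediateField.algebraAdjoinAdjoin in
theorem irreducible_num_sub_C_gen_mul_denom (ψ : RatFunc F →ₐ[F] L) {f : RatFunc F}
    (hf : ¬∃ c, f = RatFunc.C c) :
    Irreducible (f.num.map (algebraMap F F⟮ψ f⟯) -
      C (AdjoinSimple.gen F (ψ f)) * f.denom.map (algebraMap F F⟮ψ f⟯)) := by
  let e : F⟮f⟯ ≃ₐ[F] F⟮ψ f⟯ := (equivMap F⟮f⟯ ψ).trans (equivOfEq (by simp [adjoin_map]))
  have he_gen : e (AdjoinSimple.gen F f) = AdjoinSimple.gen F (ψ f) := rfl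
  convert (MulEquiv.irreducible_iff (mapEquiv e.toRingEquiv)).2 (f.irreducible_minpolyX hf)
    using 1
  simp [RatFunc.minpolyX, Polynomial.map_map, he_gen, ← AlgEquiv.toAlgHom_toRingHom]

theorem irreducible_of_map_eq_sub_C_div_mul {y t : L} (hy : Transcendental F y) {A B : F[X]}
    (hAB : IsCoprime A B) (hdeg : A.natDegree ≠ 0 ∨ B.natDegree ≠ 0)
    (ht : t = aeval y A / aeval y B) {M : IntermediateField F L} (hM : M = F⟮t⟯) {P : M[X]}
    (hP : P.map (algebraMap M L) = A.map (algebraMap F L) - C t * B.map (algebraMap F L)) :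
    Irreducible P := by
  subst hM
  have hB : B ≠ 0 := by
    rintro rfl
    simp [natDegree_eq_zero_of_isUnit (isCoprime_zero_right.1 hAB)] at hdeg
  obtain ⟨u, hA_eq, hB_eq⟩ := exists_unit_num_mul_eq_and_denom_mul_eq hAB hB
  set f := algebraMap F[X] (RatFunc F) A / algebraMap F[X] (RatFunc F) B with hf
  have natDegree_eq {p q : F[X]} (h : p * u = q) : p.natDegree = q.natDegree :=
    natDegree_eq_of_degree_eq (degree_eq_degree_of_associated ⟨u, h⟩)
  have hf_ne_C : ¬∃ c, f = RatFunc.C c := by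
    rwa [RatFunc.eq_C_iff, not_and_or, natDegree_eq hA_eq, natDegree_eq hB_eq]
  let ψ : RatFunc F →ₐ[F] L := F⟮y⟯.val.comp (RatFunc.algEquivOfTranscendental y hy).toAlgHom
  obtain rfl : t = ψ f := by
    rw [ht, hf, map_div₀]
    exact congrArg₂ (· / ·) (by simp [ψ]) (by simp [ψ])
  let v : F⟮ψ f⟯[X]ˣ := Units.map (mapRingHom (algebraMap F F⟮ψ f⟯)) u
  refine Associated.irreducible ⟨v, ?_⟩ (irreducible_num_sub_C_gen_mul_denom ψ hf_ne_C)
  apply map_injective _ (algebraMap F⟮ψ f⟯ L).injective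
  rw [hP, ← hA_eq, ← hB_eq]
  simp [v, Polynomial.map_map, sub_mul, mul_assoc, ← IsScalarTower.algebraMap_eq F F⟮ψ f⟯ L]

theorem adjoin_simple_inv (x : L) : F⟮x⁻¹⟯ = F⟮x⟯ := by
  apply le_antisymm <;> rw [adjoin_simple_le_iff]
  · exact inv_mem (mem_adjoin_simple_self F x)
  · simpa using inv_mem (mem_adjoin_simple_self F x⁻¹)

theorem isCoprime_C_mul_X_pow {c : F} (hc : c ≠ 0) (n : ℕ) {B : F[X]} (hB : B.coeff 0 ≠ 0) :
    IsCoprime (C c * X ^ n) B := by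
  rw [isCoprime_mul_unit_left_left (isUnit_C.2 hc.isUnit)]
  exact (irreducible_X.coprime_iff_not_dvd.2 (mt X_dvd_iff.1 hB)).pow_left

theorem irreducible_of_map_eq_C_mul_X_pow_sub {y s : L} (hy : Transcendental F y) {c : F}
    (hc : c ≠ 0) {n : ℕ} {B : F[X]} (hB : B.coeff 0 ≠ 0) (hdeg : n ≠ 0 ∨ B.natDegree ≠ 0)
    (hs : s * (algebraMap F L c * y ^ n) = aeval y B) {M : IntermediateField F L}
    (hM : M = F⟮s⟯) {P : M[X]}
    (hP : P.map (algebraMap M L) =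
      C (algebraMap F L c) * X ^ n - C s⁻¹ * B.map (algebraMap F L)) :
    Irreducible P := by
  have hy₀ : y ≠ 0 := fun h ↦ hy (h ▸ isAlgebraic_zero)
  have hcy : algebraMap F L c * y ^ n ≠ 0 := mul_ne_zero (by simpa using hc) (pow_ne_zero n hy₀)
  have hs_inv : s⁻¹ = aeval y (C c * X ^ n) / aeval y B := by
    simp [← hs, div_mul_cancel_right₀ hcy]
  exact irreducible_of_map_eq_sub_C_div_mul hy (isCoprime_C_mul_X_pow hc n hB)
    (by rwa [natDegree_C_mul_X_pow n c hc]) hs_inv (by rw [hM, adjoin_simple_inv])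
    (by simpa using hP)

end Luroth

section Bivariate

open Polynomial

variable {k L ι : Type*} [Field k] [Field L] [Algebra k L]

theorem transcendental_adjoin_simple_of_ne {v : ι → L} (hv : AlgebraicIndependent k v) {i j : ι}
    (hij : i ≠ j) : Transcendental k⟮v i⟯ (v j) := by
  rw [transcendental_adjoin_iff, ← Set.image_singleton]
  exact hv.transcendental_adjoin hij.symm

theorem irreducible_of_map_eq_C_pow_mul_X_pow_sub {x y s : L} (hx : Transcendental k x)
    (hy : Transcendental k⟮x⟯ y) {m n : ℕ} {q : k[X][X]} (hq : q.coeff 0 ≠ 0)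
    (hdeg : n ≠ 0 ∨ q.natDegree ≠ 0)
    (hs : s * (x ^ m * y ^ n) = q.eval₂ (aeval x).toRingHom y) {P : k⟮x, s⟯[X]}
    (hP : P.map (algebraMap k⟮x, s⟯ L) =
      C (x ^ m) * X ^ n - C s⁻¹ * q.map (aeval x).toRingHom) :
    Irreducible P := by
  let g : k⟮x⟯ := AdjoinSimple.gen k x
  let φ : k[X] →+* k⟮x⟯ := (aeval g).toRingHom
  have hg : Transcendental k g :=
    (transcendental_algebraMap_iff (algebraMap k⟮x⟯ L).injective).1 hx
  have hg₀ : g ≠ 0 := fun h ↦ hg (h ▸ isAlgebraic_zero)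
  have hφ : Function.Injective φ := transcendental_iff_injective.1 hg
  have hφ_comp : (algebraMap k⟮x⟯ L).comp φ = (aeval x).toRingHom := by
    ext <;> simp [φ, g, ← IsScalarTower.algebraMap_apply]
  have hle : k⟮x⟯ ≤ k⟮x, s⟯ := adjoin.mono _ _ _ (by simp)
  have hM : extendScalars hle = k⟮x⟯⟮s⟯ :=
    restrictScalars_injective k (adjoin_simple_adjoin_simple k x s).symm
  refine irreducible_of_map_eq_C_mul_X_pow_sub (n := n) (B := q.map φ) hy (pow_ne_zero m hg₀)
    ?_ ?_ ?_ hM (hP.trans ?_)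
  · rwa [coeff_map, map_ne_zero_iff φ hφ]
  · rwa [natDegree_map_eq_of_injective hφ]
  · rw [aeval_def, eval₂_map, hφ_comp, ← hs]; simp [g]
  · rw [Polynomial.map_map, hφ_comp]; simp [g]

/-- The bivariate polynomial `∑ i ∈ s, c i * X ^ a i * Y ^ b i`, encoded as a polynomial in `Y`
over `k[X]`. It represents the numerator of a step polynomial whose negative exponents have been
cleared. -/
def bivariateSum (s : Finset ι) (c : ι → k) (a b : ι → ℕ) : k[X][X] :=
  ∑ i ∈ s, monomial (b i) (monomial (a i) (c i))

variable {s : Finset ι} {c : ι → k} {a b : ι → ℕ}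

theorem coeff_coeff_bivariateSum (hab : Set.InjOn (fun i ↦ (a i, b i)) s) {i : ι} (hi : i ∈ s) :
    ((bivariateSum s c a b).coeff (b i)).coeff (a i) = c i := by
  rw [bivariateSum, finsetSum_coeff, finsetSum_coeff, Finset.sum_eq_single_of_mem i hi]
  · simp only [coeff_monomial_same]
  · intro j hj hji
    have hne : ¬(b j = b i ∧ a j = a i) := fun h ↦ hji (hab hj hi (Prod.ext h.2 h.1))
    rw [coeff_monomial]
    split_ifs with hb
    · rw [coeff_monomial, if_neg fun ha ↦ hne ⟨hb, ha⟩]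
    · rfl

theorem coeff_bivariateSum_ne_zero (hc : ∀ i ∈ s, c i ≠ 0)
    (hab : Set.InjOn (fun i ↦ (a i, b i)) s) {i : ι} (hi : i ∈ s) :
    (bivariateSum s c a b).coeff (b i) ≠ 0 := fun h ↦
  hc i hi <| by rw [← coeff_coeff_bivariateSum (c := c) hab hi, h, coeff_zero]

theorem irreducible_of_map_eq_C_pow_mul_X_pow_sub_sum {x y S : L} (hx : Transcendental k x)
    (hy : Transcendental k⟮x⟯ y) {m n : ℕ} (hc : ∀ i ∈ s, c i ≠ 0)
    (hab : Set.InjOn (fun i ↦ (a i, b i)) s) (hb_zero : ∃ i ∈ s, b i = 0)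
    (hb_ne : ∃ i ∈ s, b i ≠ n)
    (hS : S * (x ^ m * y ^ n) = ∑ i ∈ s, algebraMap k L (c i) * x ^ a i * y ^ b i)
    {P : k⟮x, S⟯[X]}
    (hP : P.map (algebraMap k⟮x, S⟯ L) =
      C x ^ m * X ^ n - C S⁻¹ * ∑ i ∈ s, C (algebraMap k L (c i)) * C x ^ a i * X ^ b i) :
    Irreducible P := by
  have hcoeff {i : ι} (hi : i ∈ s) := coeff_bivariateSum_ne_zero hc hab hi
  obtain ⟨i, hi, hbi⟩ := hb_zero
  obtain ⟨j, hj, hbj⟩ := hb_ne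
  have hdeg : n ≠ 0 ∨ (bivariateSum s c a b).natDegree ≠ 0 := by
    have := le_natDegree_of_ne_zero (hcoeff hj)
    omega
  refine irreducible_of_map_eq_C_pow_mul_X_pow_sub hx hy (hbi ▸ hcoeff hi) hdeg
    (hS.trans ?_) (hP.trans ?_)
  · simp [bivariateSum, eval₂_finsetSum, aeval_monomial]
  · simp [bivariateSum, Polynomial.map_sum, ← C_mul_X_pow_eq_monomial]

end Bivariate

section StepPolynomial

open Polynomial

variable {K : Type} [Field K] [Algebra ℂ K] {St : Finset (ℤ × ℤ)} {w : ℤ × ℤ → ℂ} {mx my : ℕ}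
  {x y : K}

theorem NotUnivariate.exists_fst_ne_zero (h : NotUnivariate St) : ∃ p ∈ St, p.1 ≠ 0 := by
  obtain ⟨⟨p, hp, q, hq, hpq⟩, -⟩ := h
  exact (hpq.ne_or_ne 0).elim (⟨p, hp, ·⟩) (⟨q, hq, ·⟩)

theorem NotUnivariate.exists_snd_ne_zero (h : NotUnivariate St) : ∃ p ∈ St, p.2 ≠ 0 := by
  obtain ⟨-, p, hp, q, hq, hpq⟩ := h
  exact (hpq.ne_or_ne 0).elim (⟨p, hp, ·⟩) (⟨q, hq, ·⟩)

theorem ExponentBounds.injOn_toNat (hb : ExponentBounds St mx my) :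
    Set.InjOn (fun p : ℤ × ℤ ↦ ((p.1 + (mx : ℤ)).toNat, (p.2 + (my : ℤ)).toNat)) St := by
  intro p hp q hq hpq
  have := hb.lowerX p hp
  have := hb.lowerX q hq
  have := hb.lowerY p hp
  have := hb.lowerY q hq
  rw [Prod.mk.injEq] at hpq
  exact Prod.ext (by omega) (by omega)

theorem stepEval_mul_pow_mul_pow (hb : ExponentBounds St mx my) (hx : x ≠ 0) (hy : y ≠ 0) :
    stepEval St w x y * (x ^ mx * y ^ my) = ∑ p ∈ St, algebraMap ℂ K (w p) *
      x ^ (p.1 + (mx : ℤ)).toNat * y ^ (p.2 + (my : ℤ)).toNat := by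
  rw [stepEval, Finset.sum_mul]
  refine Finset.sum_congr rfl fun p hp ↦ ?_
  have hpx := hb.lowerX p hp
  have hpy := hb.lowerY p hp
  rw [← zpow_natCast x (p.1 + mx).toNat, ← zpow_natCast y (p.2 + my).toNat,
    Int.toNat_of_nonneg (by omega), Int.toNat_of_nonneg (by omega), zpow_add₀ hx, zpow_add₀ hy,
    zpow_natCast, zpow_natCast]
  ring

theorem map_kernelAtX :
    (kernelAtX St w mx my x y).map (algebraMap (kxF St w x y) K) =
      C x ^ mx * X ^ my - C (stepEval St w x y)⁻¹ * ∑ p ∈ St, C (algebraMap ℂ K (w p)) *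
        C x ^ (p.1 + (mx : ℤ)).toNat * X ^ (p.2 + (my : ℤ)).toNat := by
  simp [kernelAtX, kernelPoly, Polynomial.map_sum, ← IsScalarTower.algebraMap_apply]

theorem map_kernelAtY :
    (kernelAtY St w mx my x y).map (algebraMap (kyF St w x y) K) =
      C y ^ my * X ^ mx - C (stepEval St w x y)⁻¹ * ∑ p ∈ St, C (algebraMap ℂ K (w p)) *
        C y ^ (p.2 + (my : ℤ)).toNat * X ^ (p.1 + (mx : ℤ)).toNat := by
  simp_rw [mul_comm (C y ^ my), mul_right_comm _ (C y ^ Int.toNat _)]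
  simp [kernelAtY, kernelPoly, Polynomial.map_sum, ← IsScalarTower.algebraMap_apply]

theorem irreducible_kernelAtX (hw : ∀ p ∈ St, w p ≠ 0) (hY : ∃ p ∈ St, p.2 ≠ 0)
    (hxy : AlgebraicIndependent ℂ ![x, y]) (hb : ExponentBounds St mx my) :
    Irreducible (kernelAtX St w mx my x y) := by
  obtain ⟨p, hp, hp_eq⟩ := hb.attainY
  obtain ⟨q, hq, hq_ne⟩ := hY
  have hq_le := hb.lowerY q hq
  have hp_zero : (p.2 + (my : ℤ)).toNat = 0 := by omega
  have hq_ne_my : (q.2 + (my : ℤ)).toNat ≠ my := by omega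
  exact irreducible_of_map_eq_C_pow_mul_X_pow_sub_sum (hxy.transcendental 0)
    (transcendental_adjoin_simple_of_ne hxy zero_ne_one) hw hb.injOn_toNat
    ⟨p, hp, hp_zero⟩ ⟨q, hq, hq_ne_my⟩
    (stepEval_mul_pow_mul_pow hb (hxy.ne_zero 0) (hxy.ne_zero 1)) map_kernelAtX

theorem irreducible_kernelAtY (hw : ∀ p ∈ St, w p ≠ 0) (hX : ∃ p ∈ St, p.1 ≠ 0)
    (hxy : AlgebraicIndependent ℂ ![x, y]) (hb : ExponentBounds St mx my) :
    Irreducible (kernelAtY St w mx my x y) := by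
  obtain ⟨p, hp, hp_eq⟩ := hb.attainX
  obtain ⟨q, hq, hq_ne⟩ := hX
  have hq_le := hb.lowerX q hq
  have hp_zero : (p.1 + (mx : ℤ)).toNat = 0 := by omega
  have hq_ne_mx : (q.1 + (mx : ℤ)).toNat ≠ mx := by omega
  have hS : stepEval St w x y * (y ^ my * x ^ mx) = ∑ p ∈ St, algebraMap ℂ K (w p) *
      y ^ (p.2 + (my : ℤ)).toNat * x ^ (p.1 + (mx : ℤ)).toNat := by
    rw [mul_comm (y ^ my)]
    exact (stepEval_mul_pow_mul_pow hb (hxy.ne_zero 0) (hxy.ne_zero 1)).trans <|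
      Finset.sum_congr rfl fun _ _ ↦ mul_right_comm _ _ _
  exact irreducible_of_map_eq_C_pow_mul_X_pow_sub_sum (hxy.transcendental 1)
    (transcendental_adjoin_simple_of_ne hxy one_ne_zero) hw
    (Prod.swap_injective.comp_injOn hb.injOn_toNat)
    ⟨p, hp, hp_zero⟩ ⟨q, hq, hq_ne_mx⟩ hS map_kernelAtY

theorem stmt2_general (hw : ∀ p ∈ St, w p ≠ 0) (hX : ∃ p ∈ St, p.1 ≠ 0)
    (hY : ∃ p ∈ St, p.2 ≠ 0) (hxy : AlgebraicIndependent ℂ ![x, y])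
    (hb : ExponentBounds St mx my) :
    Irreducible (kernelAtX St w mx my x y) ∧ Irreducible (kernelAtY St w mx my x y) :=
  ⟨irreducible_kernelAtX hw hY hxy hb, irreducible_kernelAtY hw hX hxy hb⟩

end StepPolynomial

/-- The specialization `K̃(x,Y,1/S(x,y))` is irreducible in `k(x)[Y]`,
and the specialization `K̃(X,y,1/S(x,y))` is irreducible in `k(y)[X]`. -/
theorem stmt2 {K : Type} [Field K] [Algebra ℂ K]
    (St : Finset (ℤ × ℤ)) (w : ℤ × ℤ → ℂ) (x y : K) (mx my : ℕ)
    (hset : Setting St w x y) (hb : ExponentBounds St mx my) :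
    Irreducible (kernelAtX St w mx my x y) ∧
    Irreducible (kernelAtY St w mx my x y) :=
  stmt2_general hset.weight_ne hset.notUniv.exists_fst_ne_zero hset.notUniv.exists_snd_ne_zero
    hset.indep hb

end QuadrantWalk
end
end

section
/- k(𝒪) is the smallest subfield of 𝕂 that is simultaneously a Galois extension of k(x) and a Galois extension of k(y): k(𝒪) is Galois over k(x) and over k(y), and every subfield M ⊆ 𝕂 containing k(x) and k(y) that is Galois over k(x) and Galois over k(y) contains k(𝒪). -/
open IntermediateField
open scoped BigOperators Classical

set_option synthInstance.maxHeartbeats 1000000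
set_option maxHeartbeats 1600000

noncomputable section

namespace QuadrantWalk

/-!
As `𝕂` is Galois over `k(x)`, an intermediate field of `𝕂/k(x)` is Galois over `k(x)` if and only
if it is stable under `Gal(𝕂/k(x))`, and likewise for `k(y)`. Hence a field containing `k(x)` and
`k(y)` is Galois over both if and only if it is stable under the group `W` that these two Galois
groups generate, and the least such field is generated over `ℂ` by the `W`-orbits of `x` and `y`.

It remains to see that `𝒪` is the `W`-orbit of `(x, y)`. The field `𝕂` is algebraic over `k(x)`:
if `y` were transcendental over `k(x)`, comparing coefficients of `Y` in `S(x, Y) = S(x, y)` would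
give an algebraic relation for `x` over `ℂ`. If `(u, v)` is adjacent to `(x, y)`, then `ℂ(u, v)`
contains `k(x)` or `k(y)`, so `(u, v)` is again a transcendence basis of `𝕂` over `ℂ` and is the
image of `(x, y)` under some `σ ∈ Gal(𝕂/ℂ)`. Such a `σ` fixes `k(x)` (resp. `k(y)`) pointwise
exactly when `(x, y)` and `σ(x, y)` are `x`-adjacent (resp. `y`-adjacent). As adjacency is
preserved by `Gal(𝕂/ℂ)`, paths of adjacent pairs starting at `(x, y)` correspond to products of
such automorphisms.
-/

section Laurent

variable {F K : Type*} [Field F] [Field K] [Algebra F K]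

lemma linearIndependent_pow_of_transcendental {b : K} (hb : Transcendental F b) :
    LinearIndependent F fun n : ℕ ↦ b ^ n := by
  have hker : LinearMap.ker (Polynomial.aeval (R := F) b).toLinearMap = ⊥ :=
    LinearMap.ker_eq_bot.mpr (transcendental_iff_injective.mp hb)
  have := (Polynomial.basisMonomials F).linearIndependent.map' _ hker
  simpa [Function.comp_def] using this

lemma linearIndependent_zpow_of_transcendental {b : K} (hb : Transcendental F b) :
    LinearIndependent F fun n : ℤ ↦ b ^ n := by
  refine linearIndependent_iff_finset_linearIndependent.mpr fun s ↦ ?_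
  -- On finitely many exponents, multiplication by a large power of `b` reduces to natural powers.
  obtain ⟨N, hN⟩ : ∃ N : ℕ, ∀ n ∈ s, 0 ≤ n + N := by
    refine ⟨s.sup Int.natAbs, fun n hn ↦ ?_⟩
    have := Finset.le_sup (f := Int.natAbs) hn
    omega
  have hinj : Function.Injective fun n : s ↦ ((n : ℤ) + N).toNat := fun m n hmn ↦ by
    have := hN m m.2
    have := hN n n.2
    exact Subtype.ext (by grind)
  have hb0 : b ≠ 0 := fun h ↦ hb (h ▸ isAlgebraic_zero)
  have hcomp : LinearMap.mulLeft F (b ^ N) ∘ (fun n : s ↦ b ^ (n : ℤ)) =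
      (fun n : ℕ ↦ b ^ n) ∘ fun n : s ↦ ((n : ℤ) + N).toNat := by
    ext n
    simp only [Function.comp_apply, LinearMap.mulLeft_apply]
    rw [← zpow_natCast, ← zpow_natCast, ← zpow_add₀ hb0, Int.toNat_of_nonneg (hN n n.2), add_comm]
  refine .of_comp (LinearMap.mulLeft F (b ^ N)) ?_
  exact hcomp ▸ (linearIndependent_pow_of_transcendental hb).comp _ hinj

lemma sum_filter_eq_zero_of_linearIndependent {ι κ R V : Type*} [DecidableEq κ] [Ring R]
    [AddCommGroup V] [Module R V] {v : κ → V} (hv : LinearIndependent R v) {T : Finset ι}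
    {c : ι → R} {g : ι → κ} {s : R} {m n : κ} (h : ∑ i ∈ T, c i • v (g i) = s • v m) (hn : n ≠ m) :
    ∑ i ∈ T with g i = n, c i = 0 := by
  have hsum : ∑ i ∈ T, Finsupp.single (g i) (c i) = Finsupp.single m s :=
    hv.finsuppLinearCombination_injective (by simpa using h)
  have := DFunLike.congr_fun hsum n
  simpa [Finsupp.single_apply, Finset.sum_filter, Finsupp.finsetSum_apply, hn.symm] using this

lemma isAlgebraic_of_sum_zpow_smul_zpow {ι F L K : Type*} [Field F] [Field L] [Field K]
    [Algebra F L] [Algebra L K] {a s : L} {b : K} (ha : Transcendental F a) {T : Finset ι}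
    {c : ι → F} {f g : ι → ℤ}
    (hfg : Set.InjOn (fun i ↦ (f i, g i)) T)
    (h : ∑ i ∈ T, (c i • a ^ f i) • b ^ g i = algebraMap L K s)
    {j : ι} (hj : j ∈ T) (hcj : c j ≠ 0) (hgj : g j ≠ 0) : IsAlgebraic L b := by
  by_contra hb
  have h' : ∑ i ∈ T, (c i • a ^ f i) • b ^ g i = s • b ^ (0 : ℤ) := by
    rw [h, zpow_zero, Algebra.algebraMap_eq_smul_one]
  have hv := linearIndependent_zpow_of_transcendental hb
  have hcoeff : ∑ i ∈ T with g i = g j, c i • a ^ f i = 0 :=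
    sum_filter_eq_zero_of_linearIndependent hv h' hgj
  have hinj : Set.InjOn f ({i ∈ T | g i = g j} : Finset ι) := by
    intro i hi k hk hik
    simp only [Finset.coe_filter, Set.mem_ofPred_eq] at hi hk
    exact hfg hi.1 hk.1 (Prod.ext hik (hi.2.trans hk.2.symm))
  have hli : LinearIndepOn F (fun i ↦ a ^ f i) ({i ∈ T | g i = g j} : Finset ι) :=
    ((linearIndependent_zpow_of_transcendental ha).linearIndepOn _).comp_of_image hinj
  exact hcj (linearIndepOn_finset_iff.mp hli c hcoeff j (by simp [hj]))

end Laurent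

section FieldExtension

variable {F K : Type*} [Field F] [Field K] [Algebra F K]

lemma isAlgebraic_adjoin_of_forall_isAlgebraic {S T : Set K}
    [Algebra.IsAlgebraic (adjoin F S) K] (h : ∀ z ∈ S, IsAlgebraic (adjoin F T) z) :
    Algebra.IsAlgebraic (adjoin F T) K :=
  ⟨fun z ↦ isAlgebraic_adjoin_iff.mpr <| IsAlgebraic.adjoin_of_forall_isAlgebraic
    (fun u hu ↦ isAlgebraic_adjoin_iff.mp (h u hu.1))
    (isAlgebraic_adjoin_iff.mp (Algebra.IsAlgebraic.isAlgebraic z))⟩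

lemma isAlgebraic_of_le {E M : IntermediateField F K} [Algebra.IsAlgebraic E K] (h : E ≤ M) :
    Algebra.IsAlgebraic M K :=
  ⟨fun z ↦ (Algebra.IsAlgebraic.isAlgebraic (R := E) z).tower_top_of_subalgebra_le h⟩

lemma isTranscendenceBasis_of_isAlgebraic_adjoin {ι : Type*} [Finite ι] {a b : ι → K}
    (ha : IsTranscendenceBasis F a) (hb : Algebra.IsAlgebraic (adjoin F (Set.range b)) K) :
    IsTranscendenceBasis F b := by
  have := isAlgebraic_adjoin_iff_top.mp hb
  exact Algebra.IsAlgebraic.isTranscendenceBasis_of_lift_le_trdeg_of_finite F b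
    ha.lift_cardinalMk_eq_trdeg.le

lemma exists_algEquiv_forall_apply_eq {ι R K L : Type*} [CommRing R] [Field K] [Algebra R K]
    [Field L] [Algebra R L] [IsAlgClosed K] [IsAlgClosed L] {a : ι → K} {b : ι → L}
    (ha : IsTranscendenceBasis R a) (hb : IsTranscendenceBasis R b) :
    ∃ σ : K ≃ₐ[R] L, ∀ i, σ (a i) = b i := by
  have := IsAlgClosed.isAlgClosure_of_transcendence_basis a ha
  have := IsAlgClosed.isAlgClosure_of_transcendence_basis b hb
  let e := ha.1.aevalEquiv.symm.trans hb.1.aevalEquiv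
  have hσ (r : Algebra.adjoin R (Set.range a)) :
      IsAlgClosure.equivOfEquiv K L e.toRingEquiv r = e r :=
    IsAlgClosure.equivOfEquiv_algebraMap K L e.toRingEquiv r
  refine ⟨AlgEquiv.ofRingEquiv (f := IsAlgClosure.equivOfEquiv K L e.toRingEquiv) fun r ↦ ?_,
    fun i ↦ ?_⟩
  · exact (hσ (algebraMap R _ r)).trans (by rw [e.commutes]; rfl)
  · simpa [e] using hσ (ha.1.aevalEquiv (.X i))

end FieldExtension

section Galois

open scoped Pointwise

variable {F K : Type*} [Field F] [Field K] [Algebra F K]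

lemma isGalois_extendScalars_iff {E M : IntermediateField F K} [IsGalois E K] (h : E ≤ M) :
    IsGalois E (extendScalars h) ↔
      E.fixingSubgroup ≤ MulAction.stabilizer Gal(K/F) (M : Set K) := by
  have hnormal : IsGalois E (extendScalars h) ↔ Normal E (extendScalars h) :=
    ⟨fun _ ↦ IsGalois.to_normal, fun _ ↦
      { to_isSeparable := Algebra.isSeparable_tower_bot_of_isSeparable E (extendScalars h) K }⟩
  rw [hnormal, normal_iff_forall_map_eq']
  constructor
  · intro hmap σ hσ
    have := hmap (E.fixingSubgroupEquiv ⟨σ, hσ⟩)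
    exact congrArg ((↑) : IntermediateField E K → Set K) this
  · intro hle σ
    refine SetLike.coe_injective (?_ : _ '' _ = _)
    exact hle (E.fixingSubgroupEquiv.symm σ).2

lemma isLeast_adjoin_smul (H : Subgroup Gal(K/F)) (s : Set K) :
    IsLeast {M : IntermediateField F K | s ⊆ M ∧ H ≤ MulAction.stabilizer Gal(K/F) (M : Set K)}
      (adjoin F ((H : Set Gal(K/F)) • s)) := by
  refine ⟨⟨fun z hz ↦ subset_adjoin F _ ⟨1, H.one_mem, z, hz, one_smul _ z⟩, fun σ hσ ↦ ?_⟩, ?_⟩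
  · have hmap : (adjoin F ((H : Set Gal(K/F)) • s)).map (σ : K →ₐ[F] K) =
        adjoin F ((H : Set Gal(K/F)) • s) := by
      rw [adjoin_map]
      change adjoin F (σ • (H : Set Gal(K/F)) • s) = _
      rw [← smul_assoc, smul_coe_set hσ]
    exact congrArg ((↑) : IntermediateField F K → Set K) hmap
  · rintro M ⟨hs, hM⟩
    refine adjoin_le_iff.mpr (Set.smul_subset_iff.mpr fun σ hσ z hz ↦ ?_)
    have : σ • (M : Set K) = M := hM hσ
    exact this ▸ Set.smul_mem_smul_set (hs hz)

end Galois

section GroupAction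

open Relation

lemma setOf_reflTransGen_eq_orbit_closure {G α : Type*} [Group G] [MulAction G α] {r : α → α → Prop}
    [Std.Symm r] (hsmul : ∀ (g : G) {a b}, r a b → r (g • a) (g • b)) {a : α}
    (ha : ∀ b, r a b → b ∈ MulAction.orbit G a) :
    {b | ReflTransGen r a b} = MulAction.orbit (Subgroup.closure {g : G | r a (g • a)}) a := by
  ext b
  constructor
  · intro hb
    induction hb with
    | refl => exact MulAction.mem_orbit_self a
    | @tail b c _ hbc ih =>
      obtain ⟨⟨g, hg⟩, rfl⟩ := ih
      change r (g • a) c at hbc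
      -- Translate the step back to `a`, so that the group element it requires is a generator.
      have hac : r a (g⁻¹ • c) := by simpa using hsmul g⁻¹ hbc
      obtain ⟨k, hk⟩ := ha _ hac
      have hk' : k • a = g⁻¹ • c := hk
      refine ⟨⟨g * k, mul_mem hg (Subgroup.subset_closure ?_)⟩, ?_⟩
      · simpa [hk'] using hac
      · simp [Subgroup.smul_def, mul_smul, hk']
  · rintro ⟨⟨g, hg⟩, rfl⟩
    change ReflTransGen r a (g • a)
    induction hg using Subgroup.closure_induction with
    | mem g hg => exact .single hg
    | one => simpa using ReflTransGen.refl
    | mul g k _ _ hg hk =>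
      rw [mul_smul]
      exact hg.trans (hk.lift (g • ·) fun _ _ ↦ hsmul g)
    | inv g _ hg =>
      have h : ReflTransGen r (g⁻¹ • a) (g⁻¹ • g • a) := hg.lift (g⁻¹ • ·) fun _ _ ↦ hsmul g⁻¹
      rw [inv_smul_smul] at h
      exact symm h

end GroupAction

section Walk

open scoped Pointwise

variable {K : Type} [Field K] [Algebra ℂ K] {St : Finset (ℤ × ℤ)} {w : ℤ × ℤ → ℂ} {x y : K}

lemma stepEval_smul (σ : Gal(K/ℂ)) (u v : K) :
    stepEval St w (σ • u) (σ • v) = σ • stepEval St w u v := by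
  simp [stepEval, AlgEquiv.smul_def, map_zpow₀]

lemma Adj.smul (σ : Gal(K/ℂ)) {a b : K × K} (h : Adj St w a b) : Adj St w (σ • a) (σ • b) := by
  refine h.imp (fun h ↦ ?_) fun h ↦ ?_ <;>
    exact ⟨congrArg (σ • ·) h.1, by simp only [Prod.smul_fst, Prod.smul_snd, stepEval_smul, h.2]⟩

instance : Std.Symm (Adj St w (K := K)) :=
  ⟨fun _ _ h ↦ h.imp (fun h ↦ ⟨h.1.symm, h.2.symm⟩) fun h ↦ ⟨h.1.symm, h.2.symm⟩⟩

lemma mem_fixingSubgroup_kxF_iff {σ : Gal(K/ℂ)} :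
    σ ∈ (kxF St w x y).fixingSubgroup ↔ XAdj St w (x, y) (σ • (x, y)) := by
  rw [IntermediateField.mem_fixingSubgroup_iff]
  refine (forall_mem_adjoin_smul_eq_self_iff ℂ σ).trans ?_
  simp only [Set.mem_insert_iff, Set.mem_singleton_iff, forall_eq_or_imp, forall_eq,
    ← stepEval_smul]
  exact and_congr eq_comm eq_comm

lemma mem_fixingSubgroup_kyF_iff {σ : Gal(K/ℂ)} :
    σ ∈ (kyF St w x y).fixingSubgroup ↔ YAdj St w (x, y) (σ • (x, y)) := by
  rw [IntermediateField.mem_fixingSubgroup_iff]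
  refine (forall_mem_adjoin_smul_eq_self_iff ℂ σ).trans ?_
  simp only [Set.mem_insert_iff, Set.mem_singleton_iff, forall_eq_or_imp, forall_eq,
    ← stepEval_smul]
  exact and_congr eq_comm eq_comm

lemma stepEval_mem_kxyF : stepEval St w x y ∈ kxyF x y := by
  have hx : x ∈ kxyF x y := subset_adjoin ℂ _ (by simp)
  have hy : y ∈ kxyF x y := subset_adjoin ℂ _ (by simp)
  exact sum_mem fun p _ ↦
    mul_mem (mul_mem ((kxyF x y).algebraMap_mem _) (zpow_mem hx _)) (zpow_mem hy _)

variable (St w x y) in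
lemma kxF_sup_kyF : kxF St w x y ⊔ kyF St w x y = kxyF x y := by
  refine le_antisymm (sup_le ?_ ?_) ?_
  · exact adjoin_le_iff.mpr (Set.pair_subset (subset_adjoin ℂ _ (by simp)) stepEval_mem_kxyF)
  · exact adjoin_le_iff.mpr (Set.pair_subset (subset_adjoin ℂ _ (by simp)) stepEval_mem_kxyF)
  · exact adjoin_le_iff.mpr (Set.pair_subset
      (le_sup_left (b := kyF St w x y) (x_mem_kxF St w x y))
      (le_sup_right (a := kxF St w x y) (y_mem_kyF St w x y)))

lemma XAdj.kxF_eq {a b : K × K} (h : XAdj St w a b) : kxF St w a.1 a.2 = kxF St w b.1 b.2 := by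
  rw [kxF, kxF, h.2, h.1]

lemma YAdj.kyF_eq {a b : K × K} (h : YAdj St w a b) : kyF St w a.1 a.2 = kyF St w b.1 b.2 := by
  rw [kyF, kyF, h.2, h.1]

variable (St w x y) in
/-- The subgroup of `Gal(K/ℂ)` generated by the Galois groups of `K` over `k(x)` and over `k(y)`;
when `K` is an algebraic closure of `ℂ(x, y)`, the orbit of the walk is the orbit of `(x, y)` under
this group. -/
def walkGroup : Subgroup Gal(K/ℂ) :=
  (kxF St w x y).fixingSubgroup ⊔ (kyF St w x y).fixingSubgroup

lemma walkGroup_eq_closure :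
    walkGroup St w x y = Subgroup.closure {σ : Gal(K/ℂ) | Adj St w (x, y) (σ • (x, y))} := by
  rw [walkGroup, Subgroup.sup_eq_closure]
  congr 1
  ext σ
  exact or_congr mem_fixingSubgroup_kxF_iff mem_fixingSubgroup_kyF_iff

lemma isAlgebraic_kxF_snd (hx : Transcendental ℂ x) {p : ℤ × ℤ} (hp : p ∈ St) (hwp : w p ≠ 0)
    (hp2 : p.2 ≠ 0) : IsAlgebraic (kxF St w x y) y := by
  let X : kxF St w x y := ⟨x, x_mem_kxF St w x y⟩
  let S : kxF St w x y := ⟨stepEval St w x y, S_mem_kxF St w x y⟩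
  have hX : Transcendental ℂ X := fun h ↦ hx (h.algebraMap (A := K))
  have hXpow (n : ℤ) : ((X ^ n : kxF St w x y) : K) = x ^ n :=
    map_zpow₀ (algebraMap (kxF St w x y) K) X n
  have hS : ∑ q ∈ St, (w q • X ^ q.1) • y ^ q.2 = algebraMap (kxF St w x y) K S :=
    Finset.sum_congr rfl fun q _ ↦ by simp [Algebra.smul_def, hXpow]
  exact isAlgebraic_of_sum_zpow_smul_zpow hX (fun _ _ _ _ h ↦ h) hS hp hwp hp2

lemma isAlgebraic_kyF_fst (hy : Transcendental ℂ y) {p : ℤ × ℤ} (hp : p ∈ St) (hwp : w p ≠ 0)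
    (hp1 : p.1 ≠ 0) : IsAlgebraic (kyF St w x y) x := by
  let Y : kyF St w x y := ⟨y, y_mem_kyF St w x y⟩
  let S : kyF St w x y := ⟨stepEval St w x y, S_mem_kyF St w x y⟩
  have hY : Transcendental ℂ Y := fun h ↦ hy (h.algebraMap (A := K))
  have hYpow (n : ℤ) : ((Y ^ n : kyF St w x y) : K) = y ^ n :=
    map_zpow₀ (algebraMap (kyF St w x y) K) Y n
  have hS : ∑ q ∈ St, (w q • Y ^ q.2) • x ^ q.1 = algebraMap (kyF St w x y) K S :=
    Finset.sum_congr rfl fun q _ ↦ by simp [Algebra.smul_def, hYpow, mul_right_comm]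
  exact isAlgebraic_of_sum_zpow_smul_zpow hY (fun _ _ _ _ h ↦ Prod.swap_injective h) hS hp hwp hp1

namespace Setting

lemma isAlgebraic_kxF (hset : Setting St w x y) : Algebra.IsAlgebraic (kxF St w x y) K := by
  have : Algebra.IsAlgebraic (adjoin ℂ {x, y}) K := hset.algebraic
  obtain ⟨p, hp, hp2⟩ : ∃ p ∈ St, p.2 ≠ 0 := by
    obtain ⟨p, hp, q, hq, hpq⟩ := hset.notUniv.2
    grind
  refine isAlgebraic_adjoin_of_forall_isAlgebraic (S := {x, y}) ?_
  rintro z (rfl | rfl)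
  · exact isAlgebraic_algebraMap (⟨z, x_mem_kxF St w z y⟩ : kxF St w z y)
  · exact isAlgebraic_kxF_snd (hset.indep.transcendental 0) hp (hset.weight_ne p hp) hp2

lemma isAlgebraic_kyF (hset : Setting St w x y) : Algebra.IsAlgebraic (kyF St w x y) K := by
  have : Algebra.IsAlgebraic (adjoin ℂ {x, y}) K := hset.algebraic
  obtain ⟨p, hp, hp1⟩ : ∃ p ∈ St, p.1 ≠ 0 := by
    obtain ⟨p, hp, q, hq, hpq⟩ := hset.notUniv.1
    grind
  refine isAlgebraic_adjoin_of_forall_isAlgebraic (S := {x, y}) ?_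
  rintro z (rfl | rfl)
  · exact isAlgebraic_kyF_fst (hset.indep.transcendental 1) hp (hset.weight_ne p hp) hp1
  · exact isAlgebraic_algebraMap (⟨z, y_mem_kyF St w x z⟩ : kyF St w x z)

lemma isGalois_kxF (hset : Setting St w x y) : IsGalois (kxF St w x y) K :=
  have : IsAlgClosure (kxF St w x y) K := ⟨hset.algClosed, hset.isAlgebraic_kxF⟩
  IsAlgClosure.isGalois _ K

lemma isGalois_kyF (hset : Setting St w x y) : IsGalois (kyF St w x y) K :=
  have : IsAlgClosure (kyF St w x y) K := ⟨hset.algClosed, hset.isAlgebraic_kyF⟩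
  IsAlgClosure.isGalois _ K

lemma isTranscendenceBasis (hset : Setting St w x y) : IsTranscendenceBasis ℂ ![x, y] := by
  rw [hset.indep.isTranscendenceBasis_iff_isAlgebraic, ← isAlgebraic_adjoin_iff_top,
    Matrix.range_cons_cons_empty]
  exact hset.algebraic

lemma isAlgebraic_kxyF_of_adj (hset : Setting St w x y) {a : K × K} (ha : Adj St w (x, y) a) :
    Algebra.IsAlgebraic (kxyF a.1 a.2) K := by
  rw [← kxF_sup_kyF St w]
  rcases ha with hx | hy
  · have : Algebra.IsAlgebraic (kxF St w a.1 a.2) K := hx.kxF_eq ▸ hset.isAlgebraic_kxF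
    exact isAlgebraic_of_le le_sup_left
  · have : Algebra.IsAlgebraic (kyF St w a.1 a.2) K := hy.kyF_eq ▸ hset.isAlgebraic_kyF
    exact isAlgebraic_of_le le_sup_right

lemma mem_galOrbit_of_adj (hset : Setting St w x y) {a : K × K} (ha : Adj St w (x, y) a) :
    a ∈ MulAction.orbit Gal(K/ℂ) (x, y) := by
  have := hset.algClosed
  have hbasis : IsTranscendenceBasis ℂ ![a.1, a.2] :=
    isTranscendenceBasis_of_isAlgebraic_adjoin hset.isTranscendenceBasis <| by
      rw [Matrix.range_cons_cons_empty]
      exact hset.isAlgebraic_kxyF_of_adj ha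
  obtain ⟨σ, hσ⟩ := exists_algEquiv_forall_apply_eq hset.isTranscendenceBasis hbasis
  exact ⟨σ, Prod.ext (hσ 0) (hσ 1)⟩

lemma orbit_eq_orbit_walkGroup (hset : Setting St w x y) :
    orbit St w x y = MulAction.orbit (walkGroup St w x y) (x, y) := by
  rw [walkGroup_eq_closure]
  exact setOf_reflTransGen_eq_orbit_closure Adj.smul fun _ ↦ hset.mem_galOrbit_of_adj

lemma orbitF_eq_adjoin_walkGroup_smul (hset : Setting St w x y) :
    orbitF St w x y = adjoin ℂ ((walkGroup St w x y : Set Gal(K/ℂ)) • {x, y}) := by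
  have hcoords : {z | ∃ a ∈ orbit St w x y, z = a.1 ∨ z = a.2} =
      (walkGroup St w x y : Set Gal(K/ℂ)) • {x, y} := by
    rw [hset.orbit_eq_orbit_walkGroup]
    ext z
    constructor
    · rintro ⟨_, ⟨⟨σ, hσ⟩, rfl⟩, rfl | rfl⟩
      · exact Set.smul_mem_smul hσ (by simp)
      · exact Set.smul_mem_smul hσ (by simp)
    · rintro ⟨σ, hσ, _, rfl | rfl, rfl⟩
      · exact ⟨_, ⟨⟨σ, hσ⟩, rfl⟩, Or.inl rfl⟩
      · exact ⟨_, ⟨⟨σ, hσ⟩, rfl⟩, Or.inr rfl⟩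
  have hS : stepEval St w x y ∈ adjoin ℂ ((walkGroup St w x y : Set Gal(K/ℂ)) • {x, y}) :=
    adjoin_le_iff.mpr (isLeast_adjoin_smul (walkGroup St w x y) {x, y}).1.1 stepEval_mem_kxyF
  rw [orbitF, hcoords, adjoin_union, sup_eq_right]
  exact adjoin_simple_le_iff.mpr hS

lemma isGalois_kxF_kyF_iff (hset : Setting St w x y) {M : IntermediateField ℂ K} :
    (∃ (h1 : kxF St w x y ≤ M) (h2 : kyF St w x y ≤ M),
      IsGalois (kxF St w x y) (extendScalars h1) ∧ IsGalois (kyF St w x y) (extendScalars h2)) ↔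
      {x, y} ⊆ (M : Set K) ∧ walkGroup St w x y ≤ MulAction.stabilizer Gal(K/ℂ) (M : Set K) := by
  have := hset.isGalois_kxF
  have := hset.isGalois_kyF
  rw [← adjoin_le_iff, ← kxyF, ← kxF_sup_kyF St w, sup_le_iff, walkGroup, sup_le_iff]
  simp only [isGalois_extendScalars_iff, exists_prop, and_assoc]

end Setting

end Walk

/-- `k(𝒪)` is the smallest subfield of `𝕂` that is Galois over `k(x)`
and over `k(y)`. -/
theorem stmt8 {K : Type} [Field K] [Algebra ℂ K]
    (St : Finset (ℤ × ℤ)) (w : ℤ × ℤ → ℂ) (x y : K)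
    (hset : Setting St w x y) :
    (∃ (h1 : kxF St w x y ≤ orbitF St w x y)
       (h2 : kyF St w x y ≤ orbitF St w x y),
       IsGalois ↥(kxF St w x y) ↥(extendScalars h1) ∧
       IsGalois ↥(kyF St w x y) ↥(extendScalars h2)) ∧
    (∀ (M : IntermediateField ℂ K) (h1 : kxF St w x y ≤ M)
       (h2 : kyF St w x y ≤ M),
       IsGalois ↥(kxF St w x y) ↥(extendScalars h1) →
       IsGalois ↥(kyF St w x y) ↥(extendScalars h2) →
       orbitF St w x y ≤ M) := by
  obtain ⟨hmem, hle⟩ := hset.orbitF_eq_adjoin_walkGroup_smul ▸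
    isLeast_adjoin_smul (walkGroup St w x y) {x, y}
  exact ⟨hset.isGalois_kxF_kyF_iff.mpr hmem, fun M h1 h2 hx hy ↦
    hle (hset.isGalois_kxF_kyF_iff.mp ⟨h1, h2, hx, hy⟩)⟩

end QuadrantWalk
end
end

section
/- Let P = (I(X,t), J(Y,t)) be a pair of fractions in ℂ(X,t) × ℂ(Y,t). Then P is a pair of Galois invariants if and only if the evaluations I(x,1/S(x,y)) and J(y,1/S(x,y)) are equal, in which case this common value belongs to k(x) ∩ k(y). Moreover, P is a constant pair of Galois invariants if and only if this common value lies in k. -/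
open IntermediateField
open scoped BigOperators Classical

set_option synthInstance.maxHeartbeats 1000000
set_option maxHeartbeats 1600000

noncomputable section

namespace QuadrantWalk

/-!
The evaluation `(X, Y, t) ↦ (x, y, 1/S(x,y))` identifies `ℂ[X,Y,t]/(K̃)` with a subring of `𝕂`.
Indeed `K̃ = M - t·N` with `M = X^mx Y^my` and `N = M·S` coprime in `ℂ[X,Y]`, so by pseudo-division
`K̃` generates all the relations over `ℂ[X,Y]` satisfied by `1/S(x,y) = M(x,y)/N(x,y)`. Congruence
of regular fractions modulo `K̃` is therefore equality of their values, and since `K̃` involves both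
`X` and `Y`, every fraction missing one of these variables is regular.
-/

open MvPolynomial

section LinearKernel

lemma isRelPrime_C_C {R : Type*} [CommRing R] [IsDomain R] {a b : R} (hb : b ≠ 0)
    (hab : IsRelPrime a b) : IsRelPrime (Polynomial.C a) (Polynomial.C b) := by
  intro d hda hdb
  have hdeg : d.natDegree = 0 := by
    simpa using Polynomial.natDegree_le_of_dvd hdb (Polynomial.C_ne_zero.2 hb)
  obtain ⟨c, rfl⟩ := Polynomial.natDegree_eq_zero.1 hdeg
  have hC {r : R} (hr : Polynomial.C c ∣ Polynomial.C r) : c ∣ r := by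
    simpa only [Polynomial.coeff_C_zero] using (Polynomial.C_dvd_iff_dvd_coeff c _).1 hr 0
  exact Polynomial.isUnit_C.2 (hab (hC hda) (hC hdb))

lemma C_sub_X_mul_C_dvd_C_eval_scaleRoots_sub {R : Type*} [CommRing R] (a b : R)
    (p : Polynomial R) :
    Polynomial.C a - Polynomial.X * Polynomial.C b ∣
      Polynomial.C ((p.scaleRoots b).eval a) - Polynomial.C b ^ p.natDegree * p := by
  -- At `b * X`, which is congruent to `a`, `p.scaleRoots b` takes the value `b ^ natDegree p * p`.
  have h := Polynomial.sub_dvd_eval_sub (Polynomial.C a) (Polynomial.C b * Polynomial.X)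
    ((p.scaleRoots b).map Polynomial.C)
  rw [Polynomial.eval_map, Polynomial.eval_map, Polynomial.scaleRoots_eval₂_mul,
    Polynomial.eval₂_C_X, Polynomial.eval₂_at_apply] at h
  rwa [mul_comm Polynomial.X]

lemma eval₂_eq_zero_iff_C_sub_X_mul_C_dvd {R K : Type*} [CommRing R] [IsDomain R]
    [UniqueFactorizationMonoid R] [CommRing K] {φ : R →+* K}
    (hφ : Function.Injective φ) {a b : R} (hb : b ≠ 0) (hab : IsRelPrime a b) {z : K}
    (hz : φ b * z = φ a) (p : Polynomial R) :
    p.eval₂ φ z = 0 ↔ Polynomial.C a - Polynomial.X * Polynomial.C b ∣ p := by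
  constructor
  · intro hp
    have hr : (p.scaleRoots b).eval a = 0 := by
      apply hφ
      rw [← Polynomial.eval₂_at_apply, ← hz, Polynomial.scaleRoots_eval₂_mul, hp, mul_zero,
        map_zero]
    have hdvd := C_sub_X_mul_C_dvd_C_eval_scaleRoots_sub a b p
    rw [hr, map_zero, zero_sub, dvd_neg] at hdvd
    have hrel : IsRelPrime (Polynomial.C a - Polynomial.X * Polynomial.C b) (Polynomial.C b) :=
      fun d hd hdb => isRelPrime_C_C hb hab
        ((dvd_sub_left (hdb.mul_left Polynomial.X)).1 hd) hdb
    exact hrel.pow_right.dvd_of_dvd_mul_left hdvd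
  · rintro ⟨q, rfl⟩
    simp only [Polynomial.eval₂_mul, Polynomial.eval₂_sub, Polynomial.eval₂_C,
      Polynomial.eval₂_X, mul_comm z, hz, sub_self, zero_mul]

/-- The isomorphism `R[X₀, …, Xₙ] ≃ R[X₀, …, Xₙ₋₁][t]` sending `Xₙ` to `t`, through
which the kernel polynomial becomes linear in one variable over `ℂ[X,Y]`. -/
def lastVarEquiv (R : Type*) [CommSemiring R] (n : ℕ) :
    MvPolynomial (Fin (n + 1)) R ≃ₐ[R] Polynomial (MvPolynomial (Fin n) R) :=
  (renameEquiv R finSuccEquivLast).trans (optionEquivLeft R (Fin n))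

section lastVarEquiv

variable {R : Type*} [CommSemiring R] {n : ℕ}

lemma lastVarEquiv_X_last : lastVarEquiv R n (X (Fin.last n)) = Polynomial.X := by
  simp [lastVarEquiv, optionEquivLeft_X_none]

lemma lastVarEquiv_X_castSucc (i : Fin n) :
    lastVarEquiv R n (X i.castSucc) = Polynomial.C (X i) := by
  simp [lastVarEquiv, optionEquivLeft_X_some]

lemma lastVarEquiv_rename_castSucc (q : MvPolynomial (Fin n) R) :
    lastVarEquiv R n (rename Fin.castSucc q) = Polynomial.C q := by
  have h : (lastVarEquiv R n).toAlgHom.comp (rename Fin.castSucc) = Polynomial.CAlgHom :=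
    algHom_ext fun i => by simp [lastVarEquiv_X_castSucc]
  exact DFunLike.congr_fun h q

lemma eval₂_lastVarEquiv {A : Type*} [CommSemiring A] [Algebra R A] (f : Fin n → A) (z : A)
    (q : MvPolynomial (Fin (n + 1)) R) :
    (lastVarEquiv R n q).eval₂ (aeval f : MvPolynomial (Fin n) R →ₐ[R] A).toRingHom z =
      aeval (Fin.snoc f z : Fin (n + 1) → A) q := by
  induction q using MvPolynomial.induction_on with
  | C r =>
    rw [← algebraMap_eq, AlgEquiv.commutes, AlgHom.commutes, Polynomial.algebraMap_apply,
      Polynomial.eval₂_C]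
    exact AlgHom.commutes (aeval f) r
  | add p q hp hq => simp only [map_add, Polynomial.eval₂_add, hp, hq]
  | mul_X p i hp =>
    rw [map_mul, Polynomial.eval₂_mul, hp, map_mul]
    refine i.lastCases ?_ fun j => ?_
    · simp [lastVarEquiv_X_last]
    · simp [lastVarEquiv_X_castSucc]

end lastVarEquiv

lemma aeval_snoc_eq_zero_iff_dvd {R K : Type*} [CommRing R] [IsDomain R]
    [UniqueFactorizationMonoid R] [CommRing K] [Algebra R K] {n : ℕ} {f : Fin n → K}
    (hf : AlgebraicIndependent R f) {a b : MvPolynomial (Fin n) R} (hb : b ≠ 0)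
    (hab : IsRelPrime a b) {z : K} (hz : aeval f b * z = aeval f a)
    (q : MvPolynomial (Fin (n + 1)) R) :
    aeval (Fin.snoc f z : Fin (n + 1) → K) q = 0 ↔
      rename Fin.castSucc a - X (Fin.last n) * rename Fin.castSucc b ∣ q := by
  rw [← eval₂_lastVarEquiv, ← map_dvd_iff (lastVarEquiv R n), map_sub, map_mul,
    lastVarEquiv_rename_castSucc, lastVarEquiv_rename_castSucc, lastVarEquiv_X_last]
  exact eval₂_eq_zero_iff_C_sub_X_mul_C_dvd hf hb hab hz _

end LinearKernel

lemma exists_div_sub_div_eq_mul_div_iff {R F K : Type*} [CommRing R] [Field F] [Algebra R F]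
    [FaithfulSMul R F] [Field K] {φ : R →+* K} {π : R} (hπ : ∀ r, φ r = 0 ↔ π ∣ r)
    {a b c d : R} (hb : ¬ π ∣ b) (hd : ¬ π ∣ d) :
    (∃ r s : R, ¬ π ∣ s ∧ algebraMap R F a / algebraMap R F b -
        algebraMap R F c / algebraMap R F d =
          algebraMap R F π * (algebraMap R F r / algebraMap R F s)) ↔
      φ a / φ b = φ c / φ d := by
  have hφ {r : R} (hr : ¬ π ∣ r) : φ r ≠ 0 := mt (hπ r).1 hr
  have hinj := FaithfulSMul.algebraMap_injective R F
  have hF {r : R} (hr : ¬ π ∣ r) : algebraMap R F r ≠ 0 := fun h =>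
    hr ((map_eq_zero_iff _ hinj).1 h ▸ dvd_zero π)
  have hclear (r s : R) (hs : ¬ π ∣ s) : (algebraMap R F a / algebraMap R F b -
        algebraMap R F c / algebraMap R F d =
          algebraMap R F π * (algebraMap R F r / algebraMap R F s)) ↔
      (a * d - b * c) * s = π * r * (b * d) := by
    rw [div_sub_div _ _ (hF hb) (hF hd), ← mul_div_assoc,
      div_eq_div_iff (mul_ne_zero (hF hb) (hF hd)) (hF hs)]
    simp only [← map_mul, ← map_sub, hinj.eq_iff]
  have hzero : φ a / φ b = φ c / φ d ↔ φ (a * d - b * c) = 0 := by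
    rw [div_eq_div_iff (hφ hb) (hφ hd), map_sub, map_mul, map_mul, sub_eq_zero, mul_comm (φ b)]
  rw [hzero]
  constructor
  · rintro ⟨r, s, hs, h⟩
    have hval := congrArg φ ((hclear r s hs).1 h)
    rw [map_mul, map_mul, map_mul, (hπ π).2 dvd_rfl, zero_mul, zero_mul] at hval
    exact (mul_eq_zero.1 hval).resolve_right (hφ hs)
  · intro h
    obtain ⟨r, hr⟩ := (hπ _).1 h
    have hbd : ¬ π ∣ b * d := by
      rw [← hπ, map_mul]
      exact mul_ne_zero (hφ hb) (hφ hd)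
    exact ⟨r, b * d, hbd, (hclear r _ hbd).2 (by rw [hr])⟩

section MvPolynomial

variable {σ R : Type*}

lemma coeff_sum_monomial [CommSemiring R] {ι : Type*} {s : Finset ι} {e : ι → σ →₀ ℕ}
    (he : Set.InjOn e s) (w : ι → R) {q : ι} (hq : q ∈ s) :
    coeff (e q) (∑ p ∈ s, monomial (e p) (w p)) = w q := by
  rw [coeff_sum, Finset.sum_eq_single_of_mem q hq, coeff_monomial, if_pos rfl]
  exact fun p hp hpq => by rw [coeff_monomial, if_neg (he.ne hp hq hpq)]

lemma isRelPrime_X_pow [CommRing R] [IsDomain R] [UniqueFactorizationMonoid R] {i : σ}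
    {q : MvPolynomial σ R} {e : σ →₀ ℕ} (hei : e i = 0) (he : coeff e q ≠ 0) (n : ℕ) :
    IsRelPrime (X i ^ n) q := by
  have hdvd : ¬ X i ∣ q := by
    rintro ⟨r, rfl⟩
    rw [coeff_X_mul', if_neg (Finsupp.notMem_support_iff.2 hei)] at he
    exact he rfl
  exact IsRelPrime.pow_left (X_prime.irreducible.isRelPrime_iff_not_dvd.2 hdvd)

lemma mem_supported_of_dvd [CommSemiring R] [NoZeroDivisors R] {p q : MvPolynomial σ R}
    {s : Set σ} (hpq : p ∣ q) (hq0 : q ≠ 0) (hq : q ∈ supported R s) : p ∈ supported R s := by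
  obtain ⟨r, rfl⟩ := hpq
  rw [mem_supported] at hq ⊢
  intro i hi
  apply hq
  rw [Finset.mem_coe, mem_vars_iff_degreeOf_ne_zero] at hi ⊢
  rw [degreeOf_mul_eq (left_ne_zero_of_mul hq0) (right_ne_zero_of_mul hq0)]
  omega

lemma map_aeval_supported [CommSemiring R] {A : Type*} [CommSemiring A] [Algebra R A]
    (f : σ → A) (s : Set σ) : (supported R s).map (aeval f) = Algebra.adjoin R (f '' s) := by
  rw [supported_eq_adjoin_X, AlgHom.map_adjoin, Set.image_image]
  simp only [aeval_X]

end MvPolynomial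

section Adjoin

variable {F E : Type*} [Field F] [Field E] [Algebra F E]

lemma adjoin_insert_inv (a : E) (s : Set E) :
    adjoin F (insert a⁻¹ s) = adjoin F (insert a s) := by
  have hle (b : E) : adjoin F (insert b⁻¹ s) ≤ adjoin F (insert b s) :=
    adjoin_le_iff.2 (Set.insert_subset
      (inv_mem (subset_adjoin F _ (Set.mem_insert b s)))
      ((Set.subset_insert b s).trans (subset_adjoin F _)))
  exact (hle a).antisymm (by simpa only [inv_inv] using hle a⁻¹)

lemma mem_adjoin_image_iff {σ : Type*} {f : σ → E} {s : Set σ} {z : E} :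
    z ∈ adjoin F (f '' s) ↔ ∃ P ∈ supported F s, ∃ Q ∈ supported F s, Q ≠ 0 ∧
      z = aeval f P / aeval f Q := by
  rw [mem_adjoin_iff_div, ← map_aeval_supported]
  constructor
  · rintro ⟨_, ⟨P, hP, rfl⟩, _, ⟨Q, hQ, rfl⟩, rfl⟩
    by_cases hQ0 : Q = 0
    · exact ⟨0, zero_mem _, 1, one_mem _, one_ne_zero, by simp [hQ0]⟩
    · exact ⟨P, hP, Q, hQ, hQ0, rfl⟩
  · rintro ⟨P, hP, Q, hQ, -, rfl⟩
    exact ⟨_, ⟨P, hP, rfl⟩, _, ⟨Q, hQ, rfl⟩, rfl⟩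

end Adjoin

section Kernel

variable {St : Finset (ℤ × ℤ)} {w : ℤ × ℤ → ℂ} {mx my : ℕ}

/-- The exponent of the monomial `X^(i+mx) * Y^(j+my)` attached to the step `(i,j)` in `K̃`;
meaningful only when `-mx ≤ i` and `-my ≤ j`, since `toNat` truncates negative exponents to `0`. -/
def stepExp (mx my : ℕ) (p : ℤ × ℤ) : Fin 2 →₀ ℕ :=
  Finsupp.single 0 (p.1 + (mx : ℤ)).toNat + Finsupp.single 1 (p.2 + (my : ℤ)).toNat

/-- The step polynomial cleared of denominators: `X^mx * Y^my * S(X,Y)` in `ℂ[X,Y]`.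
It is the coefficient of `-t` in `K̃`. -/
def clearedStepPoly (St : Finset (ℤ × ℤ)) (w : ℤ × ℤ → ℂ) (mx my : ℕ) :
    MvPolynomial (Fin 2) ℂ :=
  ∑ p ∈ St, monomial (stepExp mx my p) (w p)

lemma stepExp_zero (mx my : ℕ) (p : ℤ × ℤ) :
    stepExp mx my p 0 = (p.1 + (mx : ℤ)).toNat := by
  simp [stepExp]

lemma stepExp_one (mx my : ℕ) (p : ℤ × ℤ) :
    stepExp mx my p 1 = (p.2 + (my : ℤ)).toNat := by
  simp [stepExp]

lemma injOn_stepExp (hb : ExponentBounds St mx my) : Set.InjOn (stepExp mx my) St := by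
  intro p hp q hq h
  have h0 := DFunLike.congr_fun h 0
  have h1 := DFunLike.congr_fun h 1
  rw [stepExp_zero, stepExp_zero] at h0
  rw [stepExp_one, stepExp_one] at h1
  have := hb.lowerX p hp
  have := hb.lowerX q hq
  have := hb.lowerY p hp
  have := hb.lowerY q hq
  exact Prod.ext (by omega) (by omega)

lemma exists_stepExp_ne_zero (hb : ExponentBounds St mx my) (hn : NotUnivariate St)
    (i : Fin 2) : ∃ q ∈ St, stepExp mx my q i ≠ 0 := by
  obtain ⟨⟨p, hp, q, hq, hpq⟩, ⟨p', hp', q', hq', hpq'⟩⟩ := hn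
  by_contra! h
  fin_cases i
  · have h1 := h p hp
    have h2 := h q hq
    simp only [Fin.zero_eta, stepExp_zero] at h1 h2
    have := hb.lowerX p hp
    have := hb.lowerX q hq
    omega
  · have h1 := h p' hp'
    have h2 := h q' hq'
    simp only [Fin.mk_one, stepExp_one] at h1 h2
    have := hb.lowerY p' hp'
    have := hb.lowerY q' hq'
    omega

lemma coeff_clearedStepPoly_ne_zero (hb : ExponentBounds St mx my) (hw : ∀ p ∈ St, w p ≠ 0)
    {q : ℤ × ℤ} (hq : q ∈ St) :
    coeff (stepExp mx my q) (clearedStepPoly St w mx my) ≠ 0 := by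
  rw [clearedStepPoly, coeff_sum_monomial (injOn_stepExp hb) w hq]
  exact hw q hq

lemma clearedStepPoly_ne_zero (hb : ExponentBounds St mx my) (hw : ∀ p ∈ St, w p ≠ 0) :
    clearedStepPoly St w mx my ≠ 0 := by
  obtain ⟨q, hq, -⟩ := hb.attainX
  exact ne_zero_iff.2 ⟨_, coeff_clearedStepPoly_ne_zero hb hw hq⟩

lemma isRelPrime_clearedStepPoly (hb : ExponentBounds St mx my) (hw : ∀ p ∈ St, w p ≠ 0) :
    IsRelPrime (X 0 ^ mx * X 1 ^ my) (clearedStepPoly St w mx my) := by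
  obtain ⟨p, hp, hp0⟩ := hb.attainX
  obtain ⟨q, hq, hq0⟩ := hb.attainY
  have hX := isRelPrime_X_pow (i := 0) (by rw [stepExp_zero]; omega)
    (coeff_clearedStepPoly_ne_zero hb hw hp) mx
  have hY := isRelPrime_X_pow (i := 1) (by rw [stepExp_one]; omega)
    (coeff_clearedStepPoly_ne_zero hb hw hq) my
  exact hX.mul_left hY

lemma kernelPoly_eq (St : Finset (ℤ × ℤ)) (w : ℤ × ℤ → ℂ) (mx my : ℕ) :
    kernelPoly St w mx my = rename Fin.castSucc (X 0 ^ mx * X 1 ^ my) -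
      X (Fin.last 2) * rename Fin.castSucc (clearedStepPoly St w mx my) := by
  have hmonomial (p : ℤ × ℤ) : (monomial (stepExp mx my p) (w p) : MvPolynomial (Fin 2) ℂ) =
      C (w p) * X 0 ^ (p.1 + (mx : ℤ)).toNat * X 1 ^ (p.2 + (my : ℤ)).toNat := by
    rw [stepExp, C_mul_X_pow_eq_monomial, X_pow_eq_monomial, monomial_mul, mul_one]
  simp only [kernelPoly, clearedStepPoly, hmonomial, map_sum, map_mul, map_pow, rename_X,
    rename_C]
  rfl

lemma coeff_kernelPoly (e : Fin 2 →₀ ℕ) :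
    coeff (Finsupp.single (Fin.last 2) 1 + e.mapDomain Fin.castSucc)
      (kernelPoly St w mx my) = -coeff e (clearedStepPoly St w mx my) := by
  have hinj := Fin.castSucc_injective 2
  have hlast : Fin.last 2 ∉ Set.range (Fin.castSucc : Fin 2 → Fin 3) :=
    fun ⟨j, hj⟩ => Fin.castSucc_ne_last j hj
  rw [kernelPoly_eq, coeff_sub, coeff_X_mul, coeff_rename_mapDomain _ hinj,
    coeff_rename_eq_zero, zero_sub]
  intro u hu
  have h := DFunLike.congr_fun hu (Fin.last 2)
  rw [Finsupp.add_apply, Finsupp.mapDomain_of_notMem_range _ _ hlast,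
    Finsupp.mapDomain_of_notMem_range _ _ hlast, Finsupp.single_eq_same] at h
  exact absurd h (by norm_num)

lemma castSucc_mem_vars_kernelPoly (hb : ExponentBounds St mx my) (hw : ∀ p ∈ St, w p ≠ 0)
    (hn : NotUnivariate St) (i : Fin 2) : i.castSucc ∈ (kernelPoly St w mx my).vars := by
  obtain ⟨q, hq, hqi⟩ := exists_stepExp_ne_zero hb hn i
  refine (mem_vars_iff_mem_support _).2
    ⟨Finsupp.single (Fin.last 2) 1 + (stepExp mx my q).mapDomain Fin.castSucc, ?_, ?_⟩
  · rw [mem_support_iff, coeff_kernelPoly, neg_ne_zero]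
    exact coeff_clearedStepPoly_ne_zero hb hw hq
  · rw [Finsupp.mem_support_iff, Finsupp.add_apply,
      Finsupp.mapDomain_apply (Fin.castSucc_injective 2)]
    omega

lemma not_kernelPoly_dvd (hb : ExponentBounds St mx my) (hw : ∀ p ∈ St, w p ≠ 0)
    (hn : NotUnivariate St) {i : Fin 2} {s : Set (Fin 3)} (hi : i.castSucc ∉ s)
    {B : MvPolynomial (Fin 3) ℂ} (hB : B ∈ supported ℂ s) (hB0 : B ≠ 0) :
    ¬ kernelPoly St w mx my ∣ B := fun hdvd =>
  hi (mem_supported.1 (mem_supported_of_dvd hdvd hB0 hB)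
    (castSucc_mem_vars_kernelPoly hb hw hn i))

end Kernel

section Evaluation

variable {St : Finset (ℤ × ℤ)} {w : ℤ × ℤ → ℂ} {mx my : ℕ}
  {K : Type} [Field K] [Algebra ℂ K] {x y : K}

lemma aeval_clearedStepPoly (hb : ExponentBounds St mx my) (w : ℤ × ℤ → ℂ) (hx : x ≠ 0)
    (hy : y ≠ 0) :
    aeval ![x, y] (clearedStepPoly St w mx my) = x ^ mx * y ^ my * stepEval St w x y := by
  rw [clearedStepPoly, map_sum, stepEval, Finset.mul_sum]
  refine Finset.sum_congr rfl fun p hp => ?_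
  have hpow {u : K} (hu : u ≠ 0) {a : ℤ} {m : ℕ} (ha : -(m : ℤ) ≤ a) :
      u ^ (a + (m : ℤ)).toNat = u ^ a * u ^ m := by
    rw [← zpow_natCast, Int.toNat_of_nonneg (by omega), zpow_add₀ hu, zpow_natCast]
  rw [aeval_monomial, Finsupp.prod_fintype _ _ (fun _ => pow_zero _), Fin.prod_univ_two,
    stepExp_zero, stepExp_one, hpow (hu := ?_) (hb.lowerX p hp),
    hpow (hu := ?_) (hb.lowerY p hp)]
  · simp only [Matrix.cons_val_zero, Matrix.cons_val_one]
    ring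
  · exact hy
  · exact hx

lemma evalXY_eq_zero_iff_kernelPoly_dvd (hw : ∀ p ∈ St, w p ≠ 0)
    (hxy : AlgebraicIndependent ℂ ![x, y]) (hb : ExponentBounds St mx my)
    (Q : MvPolynomial (Fin 3) ℂ) :
    evalXY St w x y Q = 0 ↔ kernelPoly St w mx my ∣ Q := by
  have hN := aeval_clearedStepPoly (x := x) (y := y) hb w (hxy.ne_zero 0) (hxy.ne_zero 1)
  have hN0 := (map_ne_zero_iff _ hxy).2 (clearedStepPoly_ne_zero hb hw)
  have hS : stepEval St w x y ≠ 0 := right_ne_zero_of_mul (hN ▸ hN0)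
  have hz : aeval ![x, y] (clearedStepPoly St w mx my) * (stepEval St w x y)⁻¹ =
      aeval ![x, y] (X 0 ^ mx * X 1 ^ my : MvPolynomial (Fin 2) ℂ) := by
    rw [hN, mul_inv_cancel_right₀ hS]
    simp
  have hsnoc : (Fin.snoc ![x, y] (stepEval St w x y)⁻¹ : Fin 3 → K) =
      ![x, y, (stepEval St w x y)⁻¹] := by
    funext i
    fin_cases i <;> rfl
  rw [kernelPoly_eq, ← aeval_snoc_eq_zero_iff_dvd hxy (clearedStepPoly_ne_zero hb hw)
    (isRelPrime_clearedStepPoly hb hw) hz, hsnoc]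
  rfl

lemma isInvariantPair_iff (hw : ∀ p ∈ St, w p ≠ 0) (hxy : AlgebraicIndependent ℂ ![x, y])
    (hb : ExponentBounds St mx my) {A B Cc D : MvPolynomial (Fin 3) ℂ}
    (hB : ¬ kernelPoly St w mx my ∣ B) (hD : ¬ kernelPoly St w mx my ∣ D) :
    IsInvariantPair St w mx my A B Cc D ↔
      evalXY St w x y A / evalXY St w x y B = evalXY St w x y Cc / evalXY St w x y D :=
  exists_div_sub_div_eq_mul_div_iff (F := FF)
    (φ := (aeval ![x, y, (stepEval St w x y)⁻¹] : MvPolynomial (Fin 3) ℂ →ₐ[ℂ] K).toRingHom)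
    (evalXY_eq_zero_iff_kernelPoly_dvd hw hxy hb) hB hD

lemma mem_kxF_iff {z : K} : z ∈ kxF St w x y ↔
    ∃ P ∈ supported ℂ ({0, 2} : Set (Fin 3)), ∃ Q ∈ supported ℂ ({0, 2} : Set (Fin 3)),
      Q ≠ 0 ∧ z = evalXY St w x y P / evalXY St w x y Q := by
  have h : kxF St w x y = adjoin ℂ (![x, y, (stepEval St w x y)⁻¹] '' {0, 2}) := by
    rw [Set.image_pair]
    change adjoin ℂ {x, stepEval St w x y} = adjoin ℂ {x, (stepEval St w x y)⁻¹}
    rw [Set.pair_comm x (stepEval St w x y), Set.pair_comm x, adjoin_insert_inv]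
  rw [h, mem_adjoin_image_iff]
  rfl

lemma mem_kyF_iff {z : K} : z ∈ kyF St w x y ↔
    ∃ P ∈ supported ℂ ({1, 2} : Set (Fin 3)), ∃ Q ∈ supported ℂ ({1, 2} : Set (Fin 3)),
      Q ≠ 0 ∧ z = evalXY St w x y P / evalXY St w x y Q := by
  have h : kyF St w x y = adjoin ℂ (![x, y, (stepEval St w x y)⁻¹] '' {1, 2}) := by
    rw [Set.image_pair]
    change adjoin ℂ {y, stepEval St w x y} = adjoin ℂ {y, (stepEval St w x y)⁻¹}
    rw [Set.pair_comm y (stepEval St w x y), Set.pair_comm y, adjoin_insert_inv]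
  rw [h, mem_adjoin_image_iff]
  rfl

lemma mem_kF_iff {z : K} : z ∈ kF St w x y ↔
    ∃ P ∈ supported ℂ ({2} : Set (Fin 3)), ∃ Q ∈ supported ℂ ({2} : Set (Fin 3)),
      Q ≠ 0 ∧ z = evalXY St w x y P / evalXY St w x y Q := by
  have h : kF St w x y = adjoin ℂ (![x, y, (stepEval St w x y)⁻¹] '' {2}) := by
    rw [Set.image_singleton]
    change adjoin ℂ {stepEval St w x y} = adjoin ℂ {(stepEval St w x y)⁻¹}
    simpa only [insert_empty_eq] using
      (adjoin_insert_inv (F := ℂ) (stepEval St w x y) ∅).symm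
  rw [h, mem_adjoin_image_iff]
  rfl

lemma isConstantPair_iff (hw : ∀ p ∈ St, w p ≠ 0) (hn : NotUnivariate St)
    (hxy : AlgebraicIndependent ℂ ![x, y]) (hb : ExponentBounds St mx my)
    {A B Cc D : MvPolynomial (Fin 3) ℂ}
    (hB : ¬ kernelPoly St w mx my ∣ B) (hD : ¬ kernelPoly St w mx my ∣ D) :
    IsConstantPair St w mx my A B Cc D ↔
      evalXY St w x y A / evalXY St w x y B = evalXY St w x y Cc / evalXY St w x y D ∧
        evalXY St w x y A / evalXY St w x y B ∈ kF St w x y := by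
  have hreg {c : MvPolynomial (Fin 3) ℂ} (hc : c ∈ supported ℂ ({2} : Set (Fin 3)))
      (hc0 : c ≠ 0) : ¬ kernelPoly St w mx my ∣ c :=
    not_kernelPoly_dvd hb hw hn (i := 0) (by simp) hc hc0
  rw [IsConstantPair, isInvariantPair_iff hw hxy hb hB hD]
  refine and_congr_right fun hAC => ?_
  rw [mem_kF_iff]
  constructor
  · rintro ⟨c₁, c₂, hc₁, hc₂, hc0, hAc, -⟩
    exact ⟨c₁, hc₁, c₂, hc₂, hc0, (isInvariantPair_iff hw hxy hb hB (hreg hc₂ hc0)).1 hAc⟩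
  · rintro ⟨c₁, hc₁, c₂, hc₂, hc0, hAc⟩
    exact ⟨c₁, c₂, hc₁, hc₂, hc0, (isInvariantPair_iff hw hxy hb hB (hreg hc₂ hc0)).2 hAc,
      (isInvariantPair_iff hw hxy hb hD (hreg hc₂ hc0)).2 (hAC.symm.trans hAc)⟩

end Evaluation

theorem stmt10_general {K : Type} [Field K] [Algebra ℂ K]
    (St : Finset (ℤ × ℤ)) (w : ℤ × ℤ → ℂ) (x y : K) (mx my : ℕ)
    (hw : ∀ p ∈ St, w p ≠ 0) (hn : NotUnivariate St)
    (hxy : AlgebraicIndependent ℂ ![x, y]) (hb : ExponentBounds St mx my)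
    (A B Cc D : MvPolynomial (Fin 3) ℂ)
    (hA : A ∈ supported ℂ ({0, 2} : Set (Fin 3)))
    (hB : B ∈ supported ℂ ({0, 2} : Set (Fin 3)))
    (hC : Cc ∈ supported ℂ ({1, 2} : Set (Fin 3)))
    (hD : D ∈ supported ℂ ({1, 2} : Set (Fin 3)))
    (hB0 : B ≠ 0) (hD0 : D ≠ 0) :
    (IsInvariantPair St w mx my A B Cc D ↔
      evalXY St w x y A / evalXY St w x y B =
        evalXY St w x y Cc / evalXY St w x y D) ∧
    (IsInvariantPair St w mx my A B Cc D →
      evalXY St w x y A / evalXY St w x y B ∈ kxF St w x y ⊓ kyF St w x y) ∧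
    (IsConstantPair St w mx my A B Cc D ↔
      (evalXY St w x y A / evalXY St w x y B =
          evalXY St w x y Cc / evalXY St w x y D ∧
        evalXY St w x y A / evalXY St w x y B ∈ kF St w x y)) := by
  have hBreg := not_kernelPoly_dvd hb hw hn (i := 1) (by simp) hB hB0
  have hDreg := not_kernelPoly_dvd hb hw hn (i := 0) (by simp) hD hD0
  have hpair := isInvariantPair_iff hw hxy hb (A := A) (Cc := Cc) hBreg hDreg
  refine ⟨hpair, fun h => ⟨mem_kxF_iff.2 ⟨A, hA, B, hB, hB0, rfl⟩, ?_⟩,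
    isConstantPair_iff hw hn hxy hb hBreg hDreg⟩
  exact mem_kyF_iff.2 ⟨Cc, hC, D, hD, hD0, hpair.1 h⟩

/-- a pair `(I(X,t), J(Y,t))` is a pair of Galois invariants iff the
evaluations `I(x,1/S(x,y))` and `J(y,1/S(x,y))` are equal; in that case, the common
value lies in `k(x) ∩ k(y)`. Moreover the pair is a constant pair of Galois
invariants iff the common value lies in `k`. -/
theorem stmt10 {K : Type} [Field K] [Algebra ℂ K]
    (St : Finset (ℤ × ℤ)) (w : ℤ × ℤ → ℂ) (x y : K) (mx my : ℕ)
    (hset : Setting St w x y) (hb : ExponentBounds St mx my)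
    (A B Cc D : MvPolynomial (Fin 3) ℂ)
    (hA : A ∈ MvPolynomial.supported ℂ ({0, 2} : Set (Fin 3)))
    (hB : B ∈ MvPolynomial.supported ℂ ({0, 2} : Set (Fin 3)))
    (hC : Cc ∈ MvPolynomial.supported ℂ ({1, 2} : Set (Fin 3)))
    (hD : D ∈ MvPolynomial.supported ℂ ({1, 2} : Set (Fin 3)))
    (hB0 : B ≠ 0) (hD0 : D ≠ 0) :
    (IsInvariantPair St w mx my A B Cc D ↔
      evalXY St w x y A / evalXY St w x y B =
        evalXY St w x y Cc / evalXY St w x y D) ∧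
    (IsInvariantPair St w mx my A B Cc D →
      evalXY St w x y A / evalXY St w x y B ∈ kxF St w x y ⊓ kyF St w x y) ∧
    (IsConstantPair St w mx my A B Cc D ↔
      (evalXY St w x y A / evalXY St w x y B =
          evalXY St w x y Cc / evalXY St w x y D ∧
        evalXY St w x y A / evalXY St w x y B ∈ kF St w x y)) :=
  stmt10_general St w x y mx my hset.weight_ne hset.notUniv hset.indep hb A B Cc D hA hB
    hC hD hB0 hD0

end QuadrantWalk
end
end
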